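/- arXiv:1312.5473 — 4 statements merged into one kernel-verified Lean document; each statement's English description precedes it below -/
import Mathlib

section
/- Reverse Moser iteration for superharmonic functions: let p, q ∈ (1,∞] satisfy 1/p + 1/q < 2/d and set p∗ := p/(p−1). There exist C₆ < ∞ and κ > 0, depending only on d, p, q, C_reg and C_riso, such that for every choice of edge weights ω, every x₀ ∈ V, n ≥ 1, every u : V → (0,∞) with (L_Y^ω u)(x) ≤ 0 for all x ∈ B(x₀,n), every β ∈ (0, p∗/2), every α ∈ (0, β/2) and all σ′, σ with 1/2 ≤ σ′ < σ ≤ 1: ‖u‖_{β,B(x₀,σ′n)} ≤ (C₆·max{1, ‖μ^ω‖_{p,B(x₀,n)}·‖ν^ω‖_{q,B(x₀,n)}}/(σ−σ′)²)^{κ·(1/α − 1/β)}·‖u‖_{α,B(x₀,σn)}. -/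
open Finset MeasureTheory
open scoped ENNReal

noncomputable section

namespace RCM

variable {V : Type*}

/-- `μ^ω(x)`, the sum of the weights of edges incident to `x`. -/
def mu (nbr : V → Finset V) (ω : V → V → ℝ) (x : V) : ℝ := ∑ y ∈ nbr x, ω x y

/-- `ν^ω(x)`, the sum of the reciprocals of the weights of edges incident to `x`. -/
def nu (nbr : V → Finset V) (ω : V → V → ℝ) (x : V) : ℝ := ∑ y ∈ nbr x, (ω x y)⁻¹

/-- `(L_Y^ω f)(x)`. -/
def lap (nbr : V → Finset V) (ω : V → V → ℝ) (f : V → ℝ) (x : V) : ℝ :=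
  (mu nbr ω x)⁻¹ * ∑ y ∈ nbr x, ω x y * (f y - f x)

/-- space-averaged norm `‖f‖_{p,A}` for a real exponent `p`. -/
def nrm (A : Finset V) (p : ℝ) (f : V → ℝ) : ℝ :=
  ((A.card : ℝ)⁻¹ * ∑ x ∈ A, |f x| ^ p) ^ (1 / p)

/-- weighted space-averaged norm `‖f‖_{p,A,φ}` for a real exponent `p`. -/
def nrmW (A : Finset V) (p : ℝ) (φ : V → ℝ) (f : V → ℝ) : ℝ :=
  ((A.card : ℝ)⁻¹ * ∑ x ∈ A, |f x| ^ p * φ x) ^ (1 / p)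

/-- space-averaged norm `‖f‖_{p,A}` for an extended exponent `p ∈ (0,∞]`;
for `p = ∞` this is the maximum of `|f|` over `A`. -/
def nrmE (A : Finset V) (p : ℝ≥0∞) (f : V → ℝ) : ℝ :=
  if p = ⊤ then sSup ((fun x => |f x|) '' (A : Set V)) else nrm A p.toReal f

/-- weighted average `(u)_{A,π}`. -/
def wavg (A : Finset V) (π : V → ℝ) (u : V → ℝ) : ℝ :=
  (∑ x ∈ A, π x * u x) / ∑ x ∈ A, π x

open Classical in
/-- relative internal boundary `∂_B A`. -/
def relBdry (G : SimpleGraph V) (B A : Finset V) : Finset V :=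
  A.filter fun z => ∃ y ∈ B, y ∉ A ∧ G.Adj z y

open Classical in
/-- internal boundary `∂B`. -/
def intBdry (G : SimpleGraph V) (B : Finset V) : Finset V :=
  B.filter fun z => ∃ y, y ∉ B ∧ G.Adj z y

open Classical in
/-- Dirichlet sum `Σ_{x,y ∈ B, x∼y} ω(x,y) (u(x)-u(y))²`. -/
def dSum (G : SimpleGraph V) (ω : V → V → ℝ) (B : Finset V) (u : V → ℝ) : ℝ :=
  ∑ x ∈ B, ∑ y ∈ B, if G.Adj x y then ω x y * (u x - u y) ^ 2 else 0

/-- `E^ω_{η²}(u) = (1/2) Σ_{x,y} η(x)² ω(x,y) (u(y)-u(x))²`. -/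
def energySq (ω : V → V → ℝ) (η u : V → ℝ) : ℝ :=
  (1 / 2) * ∑' x, ∑' y, η x ^ 2 * ω x y * (u y - u x) ^ 2

/-- `E^{ω,η}(u) = (1/2) Σ_{x,y} min(η(x)²,η(y)²) ω(x,y) (u(y)-u(x))²`. -/
def energyMin (ω : V → V → ℝ) (η u : V → ℝ) : ℝ :=
  (1 / 2) * ∑' x, ∑' y, min (η x ^ 2) (η y ^ 2) * ω x y * (u y - u x) ^ 2

/-- `‖∇η‖_{ℓ∞(E)}`, the supremum of `|η(y)-η(x)|` over edges `{x,y}`. -/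
def gradSup (G : SimpleGraph V) (η : V → ℝ) : ℝ :=
  sSup {r : ℝ | ∃ x y, G.Adj x y ∧ r = |η y - η x|}

/-- `u` is caloric on `I × B`: `∂_t u = L_Y^ω u` on `I × B`. -/
def Caloric (nbr : V → Finset V) (ω : V → V → ℝ) (I : Set ℝ) (B : Set V)
    (u : ℝ → V → ℝ) : Prop :=
  ∀ x ∈ B, ∀ t ∈ I, HasDerivAt (fun s => u s x) (lap nbr ω (u t) x) t

/-- `u` is sub-caloric on `I × B`: `∂_t u ≤ L_Y^ω u` on `I × B`. -/
def SubCaloric (nbr : V → Finset V) (ω : V → V → ℝ) (I : Set ℝ) (B : Set V)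
    (u : ℝ → V → ℝ) : Prop :=
  ∀ x ∈ B, ∀ t ∈ I, ∃ d, HasDerivAt (fun s => u s x) d t ∧ d ≤ lap nbr ω (u t) x

/-- `u` is super-caloric on `I × B`: `∂_t u ≥ L_Y^ω u` on `I × B`. -/
def SuperCaloric (nbr : V → Finset V) (ω : V → V → ℝ) (I : Set ℝ) (B : Set V)
    (u : ℝ → V → ℝ) : Prop :=
  ∀ x ∈ B, ∀ t ∈ I, ∃ d, HasDerivAt (fun s => u s x) d t ∧ lap nbr ω (u t) x ≤ d

/-- space-time norm `‖u‖_{p,[a,b]×B,φ}`. -/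
def nrmST (a b : ℝ) (B : Finset V) (p : ℝ) (φ : V → ℝ) (u : ℝ → V → ℝ) : ℝ :=
  ((b - a)⁻¹ * ∫ t in a..b, nrmW B p φ (u t) ^ p) ^ (1 / p)

end RCM

namespace RCM

/-- Isoperimetric inequality for arbitrary finite sets, from volume regularity and the relative
isoperimetric inequality, by averaging over all balls of a radius adapted to the set. -/
theorem isoperimetric {V : Type*} (G : SimpleGraph V) {d : ℕ} (hd : 1 ≤ d) {Creg Criso : ℝ}
    (hCreg : 1 ≤ Creg) (hCriso : 0 < Criso) (ball : V → ℝ → Finset V)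
    (hball : ∀ (x : V) (r : ℝ) (y : V), y ∈ ball x r ↔ (G.dist x y : ℝ) ≤ r)
    (hreg : ∀ (x : V) (r : ℝ), 1 ≤ r →
      Creg⁻¹ * r ^ d ≤ ((ball x r).card : ℝ) ∧ ((ball x r).card : ℝ) ≤ Creg * r ^ d)
    (hiso : ∀ (x : V) (r : ℝ) (A : Finset V), 1 ≤ r → A.Nonempty → A ⊆ ball x r →
      (A.card : ℝ) < ((ball x r).card : ℝ) / 2 →
      Criso / r ≤ ((relBdry G (ball x r) A).card : ℝ) / (A.card : ℝ))
    (A : Finset V) (hA : A.Nonempty) :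
    Criso / (Creg ^ 2 * (4 * Creg) ^ (1 / (d : ℝ))) * (A.card : ℝ) ^ (1 - 1 / (d : ℝ)) ≤
      ((intBdry G A).card : ℝ) := by
  classical
  have hA1 : (1 : ℝ) ≤ A.card := by exact_mod_cast hA.card_pos
  have hA0 : (0 : ℝ) < A.card := by linarith
  have hd0 : (d : ℝ) ≠ 0 := by positivity
  have hC0 : 0 < Creg := by linarith
  have h4 : (1 : ℝ) ≤ 4 * Creg * A.card := by nlinarith
  set r : ℝ := (4 * Creg * A.card) ^ (1 / (d : ℝ)) with hr
  have hr1 : 1 ≤ r := Real.one_le_rpow h4 (by positivity)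
  have hr0 : 0 < r := by linarith
  have hrd : r ^ d = 4 * Creg * A.card := by
    rw [hr, ← Real.rpow_natCast, ← Real.rpow_mul (by linarith), one_div_mul_cancel hd0,
      Real.rpow_one]
  have hsym : ∀ x y, y ∈ ball x r ↔ x ∈ ball y r := fun x y => by
    rw [hball, hball, SimpleGraph.dist_comm]
  have hloc : ∀ x, Criso / r * ((A.filter fun z => z ∈ ball x r).card : ℝ) ≤
      (((intBdry G A).filter fun z => z ∈ ball x r).card : ℝ) := by
    intro x
    set A' := A.filter fun z => z ∈ ball x r with hA'
    rcases A'.eq_empty_or_nonempty with he | hne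
    · simp [he]
    · have hpos : (0 : ℝ) < A'.card := by exact_mod_cast hne.card_pos
      have hle : (A'.card : ℝ) ≤ A.card := by exact_mod_cast Finset.card_filter_le _ _
      have h1 := hiso x r A' hr1 hne (fun z hz => (Finset.mem_filter.1 hz).2) (by
        have := (hreg x r hr1).1
        rw [hrd] at this
        have h5 : Creg⁻¹ * (4 * Creg * A.card) = 4 * A.card := by field_simp
        linarith)
      rw [le_div_iff₀ hpos] at h1
      refine h1.trans ?_
      norm_cast
      apply Finset.card_le_card
      intro z hz
      simp only [relBdry, intBdry, Finset.mem_filter, hA'] at hz ⊢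
      obtain ⟨⟨hzA, hzb⟩, y, hyb, hyA, hzy⟩ := hz
      exact ⟨⟨hzA, y, fun h => hyA ⟨h, hyb⟩, hzy⟩, hzb⟩
  set U := A.biUnion fun z => ball z r with hU
  have hcount : ∀ S : Finset V, S ⊆ A →
      ∑ x ∈ U, ((S.filter fun z => z ∈ ball x r).card : ℝ) = ∑ z ∈ S, ((ball z r).card : ℝ) := by
    intro S hS
    have h := Finset.sum_card_bipartiteAbove_eq_sum_card_bipartiteBelow (s := U) (t := S)
      (fun x z => z ∈ ball x r)
    simp only [Finset.bipartiteAbove, Finset.bipartiteBelow] at h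
    have h2 : ∀ z ∈ S, (U.filter fun x => z ∈ ball x r) = ball z r := by
      intro z hz
      ext x
      simp only [Finset.mem_filter, hU, Finset.mem_biUnion]
      exact ⟨fun h => (hsym _ _).1 h.2, fun h => ⟨⟨z, hS hz, h⟩, (hsym _ _).2 h⟩⟩
    rw [Finset.sum_congr rfl fun z hz => congrArg Finset.card (h2 z hz)] at h
    exact_mod_cast h
  have hbd : intBdry G A ⊆ A := Finset.filter_subset _ _
  have hsum := Finset.sum_le_sum fun x (_ : x ∈ U) => hloc x
  rw [← Finset.mul_sum, hcount A subset_rfl, hcount _ hbd] at hsum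
  have hlow : (A.card : ℝ) * (Creg⁻¹ * r ^ d) ≤ ∑ z ∈ A, ((ball z r).card : ℝ) := by
    rw [← nsmul_eq_mul]
    exact Finset.card_nsmul_le_sum _ _ _ fun z _ => (hreg z r hr1).1
  have hup : ∑ z ∈ intBdry G A, ((ball z r).card : ℝ) ≤
      ((intBdry G A).card : ℝ) * (Creg * r ^ d) := by
    rw [← nsmul_eq_mul]
    exact Finset.sum_le_card_nsmul _ _ _ fun z _ => (hreg z r hr1).2
  have hmain : Criso / r * ((A.card : ℝ) * (Creg⁻¹ * r ^ d)) ≤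
      ((intBdry G A).card : ℝ) * (Creg * r ^ d) :=
    (mul_le_mul_of_nonneg_left hlow (by positivity)).trans (hsum.trans hup)
  have hrd0 : 0 < r ^ d := by positivity
  have hfin : Criso / (Creg ^ 2 * r) * A.card ≤ ((intBdry G A).card : ℝ) := by
    have : Criso / (Creg ^ 2 * r) * A.card * (Creg * r ^ d) =
        Criso / r * ((A.card : ℝ) * (Creg⁻¹ * r ^ d)) := by field_simp
    rw [← this] at hmain
    exact le_of_mul_le_mul_right hmain (by positivity)
  refine le_trans (le_of_eq ?_) hfin
  rw [Real.rpow_sub hA0, Real.rpow_one, hr, Real.mul_rpow (by positivity) hA0.le]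
  field_simp

/-- Discrete `ℓ¹`-Sobolev inequality: an isoperimetric inequality for subsets of `S` gives a
Sobolev inequality for functions supported in `S`, by peeling off level sets. -/
theorem sobolev_of_isoperimetric {V : Type*} (T S : Finset V) (k : V → V → ℝ)
    {c r : ℝ} (hr : 1 ≤ r)
    (hiso : ∀ A ⊆ S, A.Nonempty → c * (A.card : ℝ) ^ (1 / r) ≤
      ∑ x ∈ T, ∑ y ∈ T, k x y *
        |(A : Set V).indicator (1 : V → ℝ) x - (A : Set V).indicator (1 : V → ℝ) y|)
    (hc : 0 ≤ c) (F : V → ℝ) (hF : ∀ x, 0 ≤ F x) (hsupp : ∀ x, x ∉ S → F x = 0) :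
    c * (∑ x ∈ S, F x ^ r) ^ (1 / r) ≤ ∑ x ∈ T, ∑ y ∈ T, k x y * |F x - F y| := by
  classical
  induction hn : (S.filter fun x => F x ≠ 0).card using Nat.strong_induction_on generalizing F with
  | _ n ih =>
  subst hn
  have hr0 : r ≠ 0 := by linarith
  set A := S.filter fun x => F x ≠ 0 with hA
  have hAS : A ⊆ S := Finset.filter_subset _ _
  have hmem : ∀ x, x ∈ A ↔ F x ≠ 0 := fun x => by
    simp only [hA, Finset.mem_filter, and_iff_right_iff_imp]
    exact fun h => by_contra fun h' => h (hsupp x h')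
  rcases A.eq_empty_or_nonempty with he | hne
  · have h0 : ∀ x, F x = 0 := fun x => by
      by_contra h
      have := (hmem x).2 h
      simp [he] at this
    simp [h0, Real.zero_rpow hr0, Real.zero_rpow (inv_ne_zero hr0)]
  · obtain ⟨z, hz, hmin⟩ := Finset.exists_min_image A F hne
    set m := F z with hm
    have hm0 : 0 < m := lt_of_le_of_ne (hF z) (Ne.symm ((hmem z).1 hz))
    set I : V → ℝ := (A : Set V).indicator 1 with hI
    set g : V → ℝ := fun x => F x - m * I x with hg
    have hI1 : ∀ x, x ∈ A → I x = 1 := fun x hx => by simp [hI, hx]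
    have hI0 : ∀ x, x ∉ A → I x = 0 := fun x hx => by simp [hI, hx]
    have hF0 : ∀ x, x ∉ A → F x = 0 := fun x hx => by
      by_contra h
      exact hx ((hmem x).2 h)
    have hg0 : ∀ x, 0 ≤ g x := fun x => by
      by_cases hx : x ∈ A
      · have := hmin x hx
        simp only [hg, hI1 x hx]; linarith
      · simp [hg, hI0 x hx, hF0 x hx]
    have hgz : ∀ x, x ∉ A → g x = 0 := fun x hx => by simp [hg, hI0 x hx, hF0 x hx]
    have hlt : (S.filter fun x => g x ≠ 0).card < A.card := by
      apply Finset.card_lt_card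
      refine ⟨fun x hx => ?_, fun h => ?_⟩
      · by_contra h
        exact (Finset.mem_filter.1 hx).2 (hgz x h)
      · have := (Finset.mem_filter.1 (h hz)).2
        apply this
        simp [hg, hI1 z hz, hm]
    have hih := ih _ hlt g hg0 (fun x hx => hgz x fun h => hx (hAS h)) rfl
    have hAi := hiso A hAS hne
    have hI0' : ∀ x, 0 ≤ I x := fun x => by
      by_cases hx : x ∈ A
      · simp [hI1 x hx]
      · simp [hI0 x hx]
    have hmink := Real.Lp_add_le_of_nonneg (s := S) (f := g) (g := fun x => m * I x) hr
      (fun x _ => hg0 x) (fun x _ => mul_nonneg hm0.le (hI0' x))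
    have hFg : ∀ x, g x + m * I x = F x := fun x => by simp [hg]
    simp only [hFg] at hmink
    have hIs : (∑ x ∈ S, (m * I x) ^ r) ^ (1 / r) = m * (A.card : ℝ) ^ (1 / r) := by
      have : ∑ x ∈ S, (m * I x) ^ r = m ^ r * A.card := by
        rw [← Finset.sum_subset hAS (fun x _ hx => by simp [hI0 x hx, Real.zero_rpow hr0]),
          Finset.sum_congr rfl (fun x hx => by rw [hI1 x hx, mul_one])]
        simp [mul_comm]
      rw [this, Real.mul_rpow (by positivity) (by positivity), ← Real.rpow_mul hm0.le,
        mul_one_div_cancel hr0, Real.rpow_one]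
    rw [hIs] at hmink
    have hsplit : ∀ x y, |F x - F y| = |g x - g y| + m * |I x - I y| := by
      intro x y
      by_cases hx : x ∈ A <;> by_cases hy : y ∈ A
      · simp [hg, hI1 x hx, hI1 y hy]
      · have h1 := hg0 x
        have : F x = g x + m := by simp [hg, hI1 x hx]
        rw [hF0 y hy, hgz y hy, hI1 x hx, hI0 y hy, this]
        simp only [sub_zero, abs_one, mul_one]
        rw [abs_of_nonneg h1, abs_of_nonneg (by linarith)]
      · have h1 := hg0 y
        have : F y = g y + m := by simp [hg, hI1 y hy]
        rw [hF0 x hx, hgz x hx, hI1 y hy, hI0 x hx, this]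
        simp only [zero_sub, abs_neg, abs_one, mul_one]
        rw [abs_of_nonneg h1, abs_of_nonneg (by linarith)]
      · simp [hF0 x hx, hF0 y hy, hgz x hx, hgz y hy, hI0 x hx, hI0 y hy]
    calc c * (∑ x ∈ S, F x ^ r) ^ (1 / r)
        ≤ c * ((∑ x ∈ S, g x ^ r) ^ (1 / r) + m * (A.card : ℝ) ^ (1 / r)) :=
          mul_le_mul_of_nonneg_left hmink hc
      _ = c * (∑ x ∈ S, g x ^ r) ^ (1 / r) + m * (c * (A.card : ℝ) ^ (1 / r)) := by ring
      _ ≤ (∑ x ∈ T, ∑ y ∈ T, k x y * |g x - g y|) +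
            m * ∑ x ∈ T, ∑ y ∈ T, k x y * |I x - I y| :=
          add_le_add hih (mul_le_mul_of_nonneg_left hAi hm0.le)
      _ = ∑ x ∈ T, ∑ y ∈ T, k x y * |F x - F y| := by
          simp only [Finset.mul_sum, ← Finset.sum_add_distrib, hsplit]
          refine Finset.sum_congr rfl fun x _ => Finset.sum_congr rfl fun y _ => ?_
          ring

theorem abs_rpow_sub_rpow_le {a b s : ℝ} (ha : 0 ≤ a) (hb : 0 ≤ b) (hs : 1 ≤ s) :
    |a ^ s - b ^ s| ≤ s * (|a - b| * (a ^ (s - 1) + b ^ (s - 1))) := by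
  wlog hab : b ≤ a generalizing a b
  · have := this hb ha (le_of_not_ge hab)
    rwa [abs_sub_comm, abs_sub_comm a b, add_comm (a ^ (s - 1))]
  have hs0 : 0 < s := by linarith
  rw [abs_of_nonneg (sub_nonneg.2 (Real.rpow_le_rpow hb hab hs0.le)),
    abs_of_nonneg (sub_nonneg.2 hab)]
  rcases ha.eq_or_lt with h0 | hpos
  · have : b = 0 := by linarith
    subst this; subst h0; simp
  have h1 : -1 ≤ (b - a) / a := by
    rw [le_div_iff₀ hpos]; linarith
  have h2 := one_add_mul_self_le_rpow_one_add h1 hs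
  have h3 : 1 + (b - a) / a = b / a := by field_simp; ring
  rw [h3, Real.div_rpow hb ha, le_div_iff₀ (by positivity)] at h2
  have h4 : a ^ s = a ^ (s - 1) * a := by
    rw [Real.rpow_sub_one hpos.ne']; field_simp
  have h5 : (1 + s * ((b - a) / a)) * a ^ s = a ^ s - s * ((a - b) * a ^ (s - 1)) := by
    rw [h4]; field_simp; ring
  rw [h5] at h2
  have h6 : 0 ≤ s * ((a - b) * b ^ (s - 1)) :=
    mul_nonneg hs0.le (mul_nonneg (by linarith) (by positivity))
  nlinarith

/-- Weighted Sobolev inequality, where `1 / ρ = 2 / r - 1 / q'` in terms of the isoperimetric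
exponent `r` and the conjugate exponent `q'` of `q`. -/
theorem weighted_sobolev {V : Type*} (T S : Finset V) (hST : S ⊆ T) (ω : V → V → ℝ)
    (hω : ∀ x y, 0 ≤ ω x y) (hsymm : ∀ x y, ω x y = ω y x)
    {c r q q' ρ : ℝ} (hr : 1 ≤ r) (hc : 0 ≤ c) (hq : q.HolderConjugate q') (hρ : 0 < ρ)
    (hρr : (1 + ρ / q') * r = 2 * ρ)
    (hiso : ∀ A ⊆ S, A.Nonempty → c * (A.card : ℝ) ^ (1 / r) ≤
      ∑ x ∈ T, ∑ y ∈ T, (ω x y * (ω x y)⁻¹) *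
        |(A : Set V).indicator (1 : V → ℝ) x - (A : Set V).indicator (1 : V → ℝ) y|)
    (f : V → ℝ) (hf : ∀ x, 0 ≤ f x) (hsupp : ∀ x, x ∉ S → f x = 0) :
    c ^ 2 * (∑ x ∈ S, f x ^ (2 * ρ)) ^ (1 / ρ) ≤
      4 * (1 + ρ / q') ^ 2 * (∑ x ∈ S, (∑ y ∈ T, (ω x y)⁻¹) ^ q) ^ (1 / q) *
        ∑ x ∈ T, ∑ y ∈ T, ω x y * (f x - f y) ^ 2 := by
  have hq' : 0 < q' := hq.symm.pos
  set s : ℝ := 1 + ρ / q' with hs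
  have hs1 : 1 < s := by have : 0 < ρ / q' := by positivity
                         linarith
  have hs0 : 0 < s := by linarith
  set X := ∑ x ∈ S, f x ^ (2 * ρ) with hX
  set E := ∑ x ∈ T, ∑ y ∈ T, ω x y * (f x - f y) ^ 2 with hE
  set N := (∑ x ∈ S, (∑ y ∈ T, (ω x y)⁻¹) ^ q) ^ (1 / q) with hN
  have hωi : ∀ x y, 0 ≤ (ω x y)⁻¹ := fun x y => inv_nonneg.2 (hω x y)
  have hE0 : 0 ≤ E := Finset.sum_nonneg fun x _ => Finset.sum_nonneg fun y _ =>
    mul_nonneg (hω x y) (sq_nonneg _)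
  have hN0 : 0 ≤ N := Real.rpow_nonneg (Finset.sum_nonneg fun x _ =>
    Real.rpow_nonneg (Finset.sum_nonneg fun y _ => hωi x y) _) _
  have hX0 : 0 ≤ X := Finset.sum_nonneg fun x _ => Real.rpow_nonneg (hf x) _
  rcases hX0.eq_or_lt with h0 | hXpos
  · rw [← h0, Real.zero_rpow (by positivity), mul_zero]
    positivity
  have hsob := sobolev_of_isoperimetric T S (fun x y => ω x y * (ω x y)⁻¹) hr hiso hc
    (fun x => f x ^ s) (fun x => Real.rpow_nonneg (hf x) _)
    (fun x hx => by rw [hsupp x hx, Real.zero_rpow hs0.ne'])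
  have hXs : ∑ x ∈ S, (f x ^ s) ^ r = X :=
    Finset.sum_congr rfl fun x _ => by rw [← Real.rpow_mul (hf x), hρr]
  rw [hXs] at hsob
  set D := ∑ x ∈ T, ∑ y ∈ T, (ω x y * (ω x y)⁻¹) *
    (|f x - f y| * (f x ^ (s - 1) + f y ^ (s - 1))) with hD
  have hk : ∀ x y, 0 ≤ ω x y * (ω x y)⁻¹ := fun x y => mul_nonneg (hω x y) (hωi x y)
  have hgrad : ∑ x ∈ T, ∑ y ∈ T, (ω x y * (ω x y)⁻¹) * |f x ^ s - f y ^ s| ≤ s * D := by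
    rw [hD, Finset.mul_sum]
    refine Finset.sum_le_sum fun x _ => ?_
    rw [Finset.mul_sum]
    refine Finset.sum_le_sum fun y _ => ?_
    have := mul_le_mul_of_nonneg_left (abs_rpow_sub_rpow_le (hf x) (hf y) hs1.le) (hk x y)
    linarith
  set Q := ∑ x ∈ T, ∑ y ∈ T, (ω x y)⁻¹ * (f x ^ (s - 1) + f y ^ (s - 1)) ^ 2 with hQ
  have hCS : D ^ 2 ≤ E * Q := by
    rw [hD, hE, hQ, ← Finset.sum_product', ← Finset.sum_product', ← Finset.sum_product']
    refine Finset.sum_sq_le_sum_mul_sum_of_sq_le_mul _ (fun i _ => ?_) (fun i _ => ?_)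
      (fun i _ => ?_)
    · exact mul_nonneg (hω _ _) (sq_nonneg _)
    · exact mul_nonneg (hωi _ _) (sq_nonneg _)
    · rcases eq_or_ne (ω i.1 i.2) 0 with h | h
      · simp [h]
      · rw [mul_inv_cancel₀ h, one_mul, mul_pow, sq_abs]
        refine le_of_eq ?_
        field_simp
  have hQle : Q ≤ 4 * ∑ x ∈ T, (∑ y ∈ T, (ω x y)⁻¹) * f x ^ (2 * (s - 1)) := by
    have h1 : Q ≤ ∑ x ∈ T, ∑ y ∈ T, (2 * ((ω x y)⁻¹ * f x ^ (2 * (s - 1))) +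
        2 * ((ω y x)⁻¹ * f y ^ (2 * (s - 1)))) := by
      refine Finset.sum_le_sum fun x _ => Finset.sum_le_sum fun y _ => ?_
      have e : ∀ z, f z ^ (2 * (s - 1)) = (f z ^ (s - 1)) ^ 2 := fun z => by
        rw [mul_comm, Real.rpow_mul (hf z), Real.rpow_two]
      rw [e, e, hsymm y x]
      have := mul_le_mul_of_nonneg_left
        (show (f x ^ (s - 1) + f y ^ (s - 1)) ^ 2 ≤
          2 * (f x ^ (s - 1)) ^ 2 + 2 * (f y ^ (s - 1)) ^ 2 by
          nlinarith [sq_nonneg (f x ^ (s - 1) - f y ^ (s - 1))]) (hωi x y)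
      linarith
    refine h1.trans (le_of_eq ?_)
    simp only [Finset.sum_add_distrib]
    rw [Finset.sum_comm (f := fun x y => 2 * ((ω y x)⁻¹ * f y ^ (2 * (s - 1))))]
    simp only [← Finset.mul_sum, ← Finset.sum_mul]
    ring
  have hHol : ∑ x ∈ T, (∑ y ∈ T, (ω x y)⁻¹) * f x ^ (2 * (s - 1)) ≤ N * X ^ (1 / q') := by
    rw [← Finset.sum_subset hST fun x _ hx => by
      rw [hsupp x hx, Real.zero_rpow (by linarith), mul_zero]]
    refine (Real.inner_le_Lp_mul_Lq_of_nonneg S hq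
      (fun x _ => Finset.sum_nonneg fun y _ => hωi x y)
      (fun x _ => Real.rpow_nonneg (hf x) _)).trans (le_of_eq ?_)
    rw [hN, hX]
    congr 2
    refine Finset.sum_congr rfl fun x _ => ?_
    rw [← Real.rpow_mul (hf x)]
    congr 1
    rw [hs]; field_simp; ring
  have hXr : 0 ≤ c * X ^ (1 / r) := by positivity
  have hfin : c ^ 2 * X ^ (2 / r) ≤ 4 * s ^ 2 * N * E * X ^ (1 / q') := by
    have h1 : (c * X ^ (1 / r)) ^ 2 ≤ (s * D) ^ 2 := pow_le_pow_left₀ hXr (hsob.trans hgrad) 2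
    have h2 : (c * X ^ (1 / r)) ^ 2 = c ^ 2 * X ^ (2 / r) := by
      rw [mul_pow, ← Real.rpow_natCast (X ^ (1 / r)), ← Real.rpow_mul hX0]
      congr 2; push_cast; ring
    rw [← h2]
    calc (c * X ^ (1 / r)) ^ 2 ≤ s ^ 2 * D ^ 2 := by rw [← mul_pow]; exact h1
      _ ≤ s ^ 2 * (E * (4 * (N * X ^ (1 / q')))) := by
        refine mul_le_mul_of_nonneg_left (hCS.trans ?_) (by positivity)
        exact mul_le_mul_of_nonneg_left (hQle.trans (by linarith)) hE0
      _ = _ := by ring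
  have hexp : X ^ (2 / r) = X ^ (1 / ρ) * X ^ (1 / q') := by
    rw [← Real.rpow_add hXpos]
    congr 1
    have hr0 : r ≠ 0 := by linarith
    have hsq : q' * s = q' + ρ := by rw [hs]; field_simp
    have h2 : 2 * ρ * q' = r * (q' + ρ) := by rw [← hsq, ← hρr]; ring
    field_simp
    linarith
  rw [hexp, ← mul_assoc] at hfin
  exact le_of_mul_le_mul_right hfin (by positivity)

/-- The algebraic inequality behind the Caccioppoli estimate, in normalized form `u x = 1`,
`u y = R`. -/
theorem caccioppoli_normalized {R a η ζ : ℝ} (hR : 1 ≤ R) (ha : 0 ≤ a) (ha' : a ≤ 1 / 4)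
    (hη : 0 ≤ η) (hζ : 0 ≤ ζ) :
    (1 / 4) * (η - ζ * R ^ a) ^ 2 ≤ (R - 1) * (η ^ 2 - ζ ^ 2 * R ^ (2 * a - 1)) +
      6 * (η - ζ) ^ 2 * ((if η = 0 then 0 else 1) + (if ζ = 0 then 0 else R ^ (2 * a))) := by
  have hR0 : 0 < R := by linarith
  set S := R ^ (1 / 2 : ℝ) with hS
  have hSS : R = S ^ 2 := by rw [hS, ← Real.rpow_natCast, ← Real.rpow_mul hR0.le]; norm_num
  have hS1 : 1 ≤ S := Real.one_le_rpow hR (by norm_num)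
  set A := R ^ a with hA
  have hA1 : 1 ≤ A := Real.one_le_rpow hR ha
  have hAS : A ≤ S := Real.rpow_le_rpow_of_exponent_le hR (by linarith)
  have hA2 : R ^ (2 * a) = A ^ 2 := by
    rw [hA, ← Real.rpow_natCast, ← Real.rpow_mul hR0.le]; congr 1; push_cast; ring
  set K := R ^ (2 * a - 1) with hK
  have hKR : K * R = A ^ 2 := by
    rw [hK, Real.rpow_sub_one hR0.ne', hA2]; field_simp
  have hK0 : 0 < K := by positivity
  have hKS : K * S ≤ 1 := by
    rw [hK, hS, ← Real.rpow_add hR0]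
    exact Real.rpow_le_one_of_one_le_of_nonpos hR (by linarith)
  set P := (R - 1) * (1 - K) with hP
  have hK1 : K ≤ 1 := by nlinarith
  have hP0 : 0 ≤ P := mul_nonneg (by linarith) (by linarith)
  have hPS : (S - 1) ^ 2 * (S + 1) ≤ P * S := by
    have : (S - 1) * (S + 1) * (S - 1) ≤ (S - 1) * (S + 1) * (S - K * S) :=
      mul_le_mul_of_nonneg_left (by linarith) (mul_nonneg (by linarith) (by linarith))
    rw [hP, hSS]; linarith
  have hPS1 : (S - 1) ^ 2 ≤ P := by
    by_contra h
    push Not at h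
    have : P * S < (S - 1) ^ 2 * S := mul_lt_mul_of_pos_right h (by linarith)
    linarith [sq_nonneg (S - 1)]
  have hPA : (A - 1) ^ 2 ≤ P := (pow_le_pow_left₀ (by linarith) (by linarith) 2).trans hPS1
  rw [hA2]
  rcases le_or_gt ζ η with h | h
  · by_cases h0 : η = 0
    · have : ζ = 0 := by linarith
      simp [h0, this]
    · have e1 : (R - 1) * (η ^ 2 - ζ ^ 2 * K) ≥ η ^ 2 * P := by
        have : ζ ^ 2 * K ≤ η ^ 2 * K := mul_le_mul_of_nonneg_right (by nlinarith) hK0.le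
        have := mul_le_mul_of_nonneg_left this (show 0 ≤ R - 1 by linarith)
        rw [hP]; linarith
      have e2 : (η - ζ * A) ^ 2 ≤ 2 * (η - ζ) ^ 2 + 2 * ζ ^ 2 * (A - 1) ^ 2 := by
        linarith [sq_nonneg ((η - ζ) + ζ * (A - 1))]
      have e3 : ζ ^ 2 * (A - 1) ^ 2 ≤ η ^ 2 * P :=
        mul_le_mul (by nlinarith) hPA (sq_nonneg _) (sq_nonneg _)
      have e4 : (0 : ℝ) ≤ if ζ = 0 then 0 else A ^ 2 := by split_ifs <;> positivity
      have e5 := mul_nonneg (sq_nonneg (η - ζ)) e4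
      have e6 : 0 ≤ η ^ 2 * P := by positivity
      rw [if_neg h0]
      linarith [sq_nonneg (η - ζ)]
  · have h0 : ζ ≠ 0 := by linarith
    rw [if_neg h0]
    have e4 : (0 : ℝ) ≤ if η = 0 then 0 else 1 := by split_ifs <;> norm_num
    have e5 := mul_nonneg (sq_nonneg (η - ζ)) e4
    have eid : (R - 1) * (η ^ 2 - ζ ^ 2 * K) =
        η ^ 2 * P - (ζ - η) ^ 2 * ((R - 1) * K) - 2 * η * (ζ - η) * ((R - 1) * K) := by
      rw [hP]; ring
    have hRK : (R - 1) * K ≤ A ^ 2 := by nlinarith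
    have hRK0 : 0 ≤ (R - 1) * K := mul_nonneg (by linarith) hK0.le
    have hsq : ((R - 1) * K) ^ 2 ≤ 2 * P * A ^ 2 := by
      have : (R - 1) * ((R - 1) * K) ≤ 2 * P * R := by
        have g1 : (R - 1) * ((R - 1) * K) * S ≤ (R - 1) * (R - 1) := by
          have := mul_le_mul_of_nonneg_left hKS (mul_self_nonneg (R - 1))
          linarith
        have g2 : (R - 1) * (R - 1) ≤ 2 * ((S - 1) ^ 2 * (S + 1)) * S := by
          rw [hSS]
          have h2S : S + 1 ≤ 2 * S := by linarith
          have := mul_le_mul_of_nonneg_left h2S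
            (mul_nonneg (sq_nonneg (S - 1)) (show 0 ≤ S + 1 by linarith))
          linarith
        have g3 : 2 * ((S - 1) ^ 2 * (S + 1)) * S ≤ 2 * (P * S) * S := by
          have := mul_le_mul_of_nonneg_right hPS (show 0 ≤ S by linarith)
          linarith
        have g4 : (R - 1) * ((R - 1) * K) ≤ (R - 1) * ((R - 1) * K) * S :=
          le_mul_of_one_le_right (mul_nonneg (by linarith) hRK0) hS1
        calc _ ≤ 2 * (P * S) * S := by linarith
          _ = 2 * P * R := by rw [hSS]; ring
      calc ((R - 1) * K) ^ 2 = (R - 1) * ((R - 1) * K) * K := by ring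
        _ ≤ 2 * P * R * K := mul_le_mul_of_nonneg_right this hK0.le
        _ = 2 * P * A ^ 2 := by rw [← hKR]; ring
    have hcross : 2 * η * (ζ - η) * ((R - 1) * K) ≤ η ^ 2 * P / 2 + 4 * (ζ - η) ^ 2 * A ^ 2 := by
      have hA0 : 0 < A ^ 2 := by positivity
      have hyoung : 2 * η * (ζ - η) * ((R - 1) * K) * A ^ 2 ≤
          η ^ 2 * ((R - 1) * K) ^ 2 / 4 + 4 * (ζ - η) ^ 2 * (A ^ 2) ^ 2 := by
        linarith [sq_nonneg (η * ((R - 1) * K) / 2 - 2 * (ζ - η) * A ^ 2)]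
      have := mul_le_mul_of_nonneg_left hsq (sq_nonneg η)
      refine le_of_mul_le_mul_right (hyoung.trans ?_) hA0
      linarith
    have e2 : (η - ζ * A) ^ 2 ≤ 2 * (η ^ 2 * (A - 1) ^ 2) + 2 * ((ζ - η) ^ 2 * A ^ 2) := by
      linarith [sq_nonneg (η * (A - 1) - (ζ - η) * A)]
    have e3 : η ^ 2 * (A - 1) ^ 2 ≤ η ^ 2 * P := mul_le_mul_of_nonneg_left hPA (sq_nonneg _)
    have e7 : (ζ - η) ^ 2 * ((R - 1) * K) ≤ (ζ - η) ^ 2 * A ^ 2 :=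
      mul_le_mul_of_nonneg_left hRK (sq_nonneg _)
    have e8 : 0 ≤ (ζ - η) ^ 2 * A ^ 2 := by positivity
    rw [eid]
    have e9 : (η - ζ) ^ 2 = (ζ - η) ^ 2 := by ring
    rw [e9] at e5 ⊢
    linarith

theorem caccioppoli_pointwise {U W a η ζ : ℝ} (hU : 0 < U) (hW : 0 < W) (ha : 0 ≤ a)
    (ha' : a ≤ 1 / 4) (hη : 0 ≤ η) (hζ : 0 ≤ ζ) :
    (1 / 4) * (η * U ^ a - ζ * W ^ a) ^ 2 ≤
      (W - U) * (η ^ 2 * U ^ (2 * a - 1) - ζ ^ 2 * W ^ (2 * a - 1)) +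
      6 * (η - ζ) ^ 2 * ((if η = 0 then 0 else U ^ (2 * a)) +
        (if ζ = 0 then 0 else W ^ (2 * a))) := by
  wlog hUW : U ≤ W generalizing U W η ζ
  · have := this hW hU hζ hη (le_of_not_ge hUW)
    linarith
  obtain ⟨R, rfl⟩ : ∃ R, W = U * R := ⟨W / U, by field_simp⟩
  have hR : 1 ≤ R := by
    by_contra h
    push Not at h
    nlinarith
  have hR0 : 0 ≤ R := by linarith
  have h := mul_le_mul_of_nonneg_left (caccioppoli_normalized hR ha ha' hη hζ)
    (show 0 ≤ U ^ (2 * a) by positivity)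
  rw [Real.mul_rpow hU.le hR0, Real.mul_rpow hU.le hR0, Real.mul_rpow hU.le hR0]
  have h1 : U ^ (2 * a) = (U ^ a) ^ 2 := by
    rw [← Real.rpow_natCast, ← Real.rpow_mul hU.le]; congr 1; push_cast; ring
  have h2 : U ^ (2 * a) = U * U ^ (2 * a - 1) := by
    rw [Real.rpow_sub_one hU.ne']; field_simp
  have e1 : (1 / 4) * (η * U ^ a - ζ * (U ^ a * R ^ a)) ^ 2 =
      U ^ (2 * a) * ((1 / 4) * (η - ζ * R ^ a) ^ 2) := by rw [h1]; ring
  have e2 : (U * R - U) * (η ^ 2 * U ^ (2 * a - 1) -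
      ζ ^ 2 * (U ^ (2 * a - 1) * R ^ (2 * a - 1))) =
      U ^ (2 * a) * ((R - 1) * (η ^ 2 - ζ ^ 2 * R ^ (2 * a - 1))) := by rw [h2]; ring
  have e3 : (if η = 0 then 0 else U ^ (2 * a)) = U ^ (2 * a) * (if η = 0 then 0 else 1) := by
    split_ifs <;> ring
  have e4 : (if ζ = 0 then 0 else U ^ (2 * a) * R ^ (2 * a)) =
      U ^ (2 * a) * (if ζ = 0 then 0 else R ^ (2 * a)) := by
    split_ifs <;> ring
  rw [e1, e2, e3, e4]
  linarith

/-- Caccioppoli estimate for powers of positive supersolutions. -/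
theorem caccioppoli {V : Type*} (T : Finset V) (ω : V → V → ℝ) (hω : ∀ x y, 0 ≤ ω x y)
    (hsymm : ∀ x y, ω x y = ω y x) {a δ : ℝ} (ha : 0 ≤ a) (ha' : a ≤ 1 / 4)
    (u η : V → ℝ) (hu : ∀ x, 0 < u x) (hη : ∀ x, 0 ≤ η x)
    (hsuper : ∀ x ∈ T, η x ≠ 0 → ∑ y ∈ T, ω x y * (u y - u x) ≤ 0)
    (hgrad : ∀ x y, ω x y * (η x - η y) ^ 2 ≤ ω x y * δ) :
    ∑ x ∈ T, ∑ y ∈ T, ω x y * (η x * u x ^ a - η y * u y ^ a) ^ 2 ≤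
      48 * δ * ∑ x ∈ T, if η x = 0 then 0 else (∑ y ∈ T, ω x y) * u x ^ (2 * a) := by
  set I : V → ℝ := fun x => if η x = 0 then 0 else u x ^ (2 * a) with hI
  have hI0 : ∀ x, 0 ≤ I x := fun x => by
    simp only [hI]; split_ifs
    · exact le_rfl
    · exact Real.rpow_nonneg (hu x).le _
  set H : V → ℝ := fun x => η x ^ 2 * u x ^ (2 * a - 1) with hH
  have hpt : ∀ x y, ω x y * (η x * u x ^ a - η y * u y ^ a) ^ 2 ≤
      4 * (ω x y * (u y - u x) * H x) + 4 * (ω y x * (u x - u y) * H y) +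
        24 * δ * (ω x y * I x) + 24 * δ * (ω y x * I y) := by
    intro x y
    have h1 := mul_le_mul_of_nonneg_left
      (caccioppoli_pointwise (hu x) (hu y) ha ha' (hη x) (hη y)) (hω x y)
    have h2 := mul_le_mul_of_nonneg_right (hgrad x y) (add_nonneg (hI0 x) (hI0 y))
    simp only [hH, hI, hsymm y x] at h2 ⊢
    linarith
  have hneg : ∑ x ∈ T, ∑ y ∈ T, ω x y * (u y - u x) * H x ≤ 0 := by
    refine Finset.sum_nonpos fun x hx => ?_
    rw [← Finset.sum_mul]
    by_cases h0 : η x = 0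
    · simp [hH, h0]
    · exact mul_nonpos_of_nonpos_of_nonneg (hsuper x hx h0)
        (mul_nonneg (sq_nonneg _) (Real.rpow_nonneg (hu x).le _))
  have hsum := Finset.sum_le_sum fun x (_ : x ∈ T) =>
    Finset.sum_le_sum fun y (_ : y ∈ T) => hpt x y
  simp only [Finset.sum_add_distrib, ← Finset.mul_sum] at hsum
  rw [Finset.sum_comm (f := fun x y => ω y x * (u x - u y) * H y),
    Finset.sum_comm (f := fun x y => ω y x * I y)] at hsum
  have hlast : ∑ x ∈ T, (if η x = 0 then 0 else (∑ y ∈ T, ω x y) * u x ^ (2 * a)) =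
      ∑ x ∈ T, ∑ y ∈ T, ω x y * I x := by
    refine Finset.sum_congr rfl fun x _ => ?_
    rw [← Finset.sum_mul]
    simp only [hI]; split_ifs <;> simp
  rw [hlast]
  linarith

/-- Radial cutoff function: equal to `1` up to radius `s`, vanishing from radius `t` on. -/
def cutoff (s t : ℝ) (r : ℝ) : ℝ := max 0 (min 1 ((t - r) / (t - s)))

theorem cutoff_nonneg (s t r : ℝ) : 0 ≤ cutoff s t r := le_max_left _ _

theorem cutoff_eq_one {s t r : ℝ} (hst : s < t) (hr : r ≤ s) : cutoff s t r = 1 := by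
  have : 1 ≤ (t - r) / (t - s) := by rw [le_div_iff₀ (by linarith)]; linarith
  simp [cutoff, min_eq_left this]

theorem cutoff_eq_zero {s t r : ℝ} (hst : s < t) (hr : t ≤ r) : cutoff s t r = 0 := by
  have : (t - r) / (t - s) ≤ 0 := div_nonpos_of_nonpos_of_nonneg (by linarith) (by linarith)
  exact max_eq_left ((min_le_right _ _).trans this)

theorem abs_cutoff_sub_le {s t : ℝ} (hst : s < t) (r r' : ℝ) :
    |cutoff s t r - cutoff s t r'| ≤ |r - r'| / (t - s) := by
  have key : ∀ x y : ℝ, |max 0 (min 1 x) - max 0 (min 1 y)| ≤ |x - y| := by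
    intro x y
    grind
  refine (key _ _).trans (le_of_eq ?_)
  rw [← sub_div, abs_div, abs_of_pos (show 0 < t - s by linarith)]
  congr 1
  rw [abs_sub_comm]; congr 1; ring

/-- Unnormalized form of one step of the iteration. -/
theorem sum_rpow_le_of_superharmonic {V : Type*} (G : SimpleGraph V) (nbr : V → Finset V)
    (hnbr : ∀ x y, y ∈ nbr x ↔ G.Adj x y) (hconn : G.Connected) (ball : V → ℝ → Finset V)
    (hball : ∀ (x : V) (r : ℝ) (y : V), y ∈ ball x r ↔ (G.dist x y : ℝ) ≤ r)
    {d : ℕ} (hd : 2 ≤ d) {c : ℝ} (hc : 0 < c)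
    (hiso : ∀ A : Finset V, A.Nonempty →
      c * (A.card : ℝ) ^ (1 - 1 / (d : ℝ)) ≤ ((intBdry G A).card : ℝ))
    (ω : V → V → ℝ) (hsymm : ∀ x y, ω x y = ω y x) (hpos : ∀ x y, G.Adj x y → 0 < ω x y)
    (hzero : ∀ x y, ¬ G.Adj x y → ω x y = 0) {p p' q q' ρ : ℝ} (hp : p.HolderConjugate p')
    (hq : q.HolderConjugate q') (hρ : 0 < ρ) (hρ' : 1 / ρ = 1 - 2 / d + 1 / q)
    (x₀ : V) {n : ℝ} (hn : 1 ≤ n) (u : V → ℝ) (hu : ∀ x, 0 < u x)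
    (hsuper : ∀ x ∈ ball x₀ n, lap nbr ω u x ≤ 0) {β : ℝ} (hβ : 0 < β) (hβρ : β ≤ ρ / 2)
    {σ' σ : ℝ} (hσσ : σ' < σ) (hσ1 : σ ≤ 1) :
    c ^ 2 * (∑ x ∈ ball x₀ (σ' * n), u x ^ β) ^ (1 / ρ) ≤
      192 * (1 + ρ / q') ^ 2 / ((σ - σ') * n) ^ 2 *
        ((∑ x ∈ ball x₀ n, mu nbr ω x ^ p) ^ (1 / p) *
          (∑ x ∈ ball x₀ n, nu nbr ω x ^ q) ^ (1 / q)) *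
        (∑ x ∈ ball x₀ (σ * n), u x ^ (β * p' / ρ)) ^ (1 / p') := by
  classical
  have hn0 : 0 < n := by linarith
  set T := ball x₀ (n + 1) with hT
  set S := ball x₀ (σ * n) with hS
  have hSn : S ⊆ ball x₀ n := fun x hx => by
    rw [hS, hball] at hx; rw [hball]; nlinarith
  have hnT : ball x₀ n ⊆ T := fun x hx => by
    rw [hball] at hx; rw [hT, hball]; linarith
  have hST : S ⊆ T := hSn.trans hnT
  have hω : ∀ x y, 0 ≤ ω x y := fun x y => by
    by_cases h : G.Adj x y
    · exact (hpos x y h).le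
    · exact (hzero x y h).ge
  have hadj : ∀ {x y}, G.Adj x y → G.dist x₀ y ≤ G.dist x₀ x + 1 := fun {x y} h => by
    have := hconn.dist_triangle (u := x₀) (v := x) (w := y)
    rwa [SimpleGraph.dist_eq_one_iff_adj.2 h] at this
  have hnbrT : ∀ x ∈ ball x₀ n, nbr x ⊆ T := fun x hx y hy => by
    rw [hball] at hx
    rw [hT, hball]
    have : (G.dist x₀ y : ℝ) ≤ G.dist x₀ x + 1 := by exact_mod_cast hadj ((hnbr x y).1 hy)
    linarith
  have hzn : ∀ x y, y ∉ nbr x → ω x y = 0 := fun x y h => hzero x y fun h' => h ((hnbr x y).2 h')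
  have hmu : ∀ x ∈ ball x₀ n, ∑ y ∈ T, ω x y = mu nbr ω x := fun x hx =>
    (Finset.sum_subset (hnbrT x hx) fun y _ hy => hzn x y hy).symm
  have hnu : ∀ x ∈ ball x₀ n, ∑ y ∈ T, (ω x y)⁻¹ = nu nbr ω x := fun x hx =>
    (Finset.sum_subset (hnbrT x hx) fun y _ hy => by rw [hzn x y hy, inv_zero]).symm
  have hmu0 : ∀ x, 0 ≤ mu nbr ω x := fun x => Finset.sum_nonneg fun y _ => hω x y
  have hnu0 : ∀ x, 0 ≤ nu nbr ω x := fun x =>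
    Finset.sum_nonneg fun y _ => inv_nonneg.2 (hω x y)
  have hL : ∀ x ∈ ball x₀ n, ∑ y ∈ T, ω x y * (u y - u x) ≤ 0 := by
    intro x hx
    rw [← Finset.sum_subset (hnbrT x hx) fun y _ hy => by rw [hzn x y hy, zero_mul]]
    have h := hsuper x hx
    unfold lap at h
    rcases (hmu0 x).eq_or_lt with h0 | h0
    · have : ∀ y ∈ nbr x, ω x y = 0 := (Finset.sum_eq_zero_iff_of_nonneg fun y _ => hω x y).1 h0.symm
      exact (Finset.sum_eq_zero fun y hy => by rw [this y hy, zero_mul]).le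
    · by_contra hc
      push Not at hc
      exact absurd h (not_le.2 (mul_pos (inv_pos.2 h0) hc))
  set a := β / (2 * ρ) with ha
  have ha0 : 0 ≤ a := by positivity
  have ha1 : a ≤ 1 / 4 := by rw [ha, div_le_iff₀ (by positivity)]; linarith
  have hcut : σ' * n < σ * n := by nlinarith
  set η : V → ℝ := fun x => cutoff (σ' * n) (σ * n) (G.dist x₀ x) with hη
  have hη0 : ∀ x, 0 ≤ η x := fun x => cutoff_nonneg _ _ _
  have hηS : ∀ x, x ∉ S → η x = 0 := fun x hx => by
    rw [hS, hball, not_le] at hx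
    exact cutoff_eq_zero hcut hx.le
  set f : V → ℝ := fun x => η x * u x ^ a with hf
  have hf0 : ∀ x, 0 ≤ f x := fun x => mul_nonneg (hη0 x) (Real.rpow_nonneg (hu x).le _)
  have hd0 : (0 : ℝ) < d := by positivity
  have hd2 : (2 : ℝ) ≤ d := by exact_mod_cast hd
  have hq'0 : 0 < q' := hq.symm.pos
  have hq0 : 0 < q := hq.pos
  have hqq : 1 / q = 1 - 1 / q' := by
    have := hq.inv_add_inv_eq_one
    rw [one_div, one_div]; linarith
  -- the Sobolev side
  have hsob := weighted_sobolev T S hST ω hω hsymm (c := c) (r := d / (d - 1)) (ρ := ρ)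
    (by rw [le_div_iff₀ (by linarith)]; linarith) hc.le hq hρ
    (by
      rw [hqq] at hρ'
      have h1 : ρ * (2 - 2 / d - 1 / q') = 1 := by
        rw [show 2 - 2 / (d : ℝ) - 1 / q' = 1 / ρ by rw [hρ']; ring]; field_simp
      have h2 : 1 + ρ / q' = 2 * ρ * (1 - 1 / d) := by
        linear_combination (-1 : ℝ) * h1
      rw [h2]
      have : (d : ℝ) - 1 ≠ 0 := by linarith
      field_simp)
    (fun A hA hne => by
      have he : 1 / ((d : ℝ) / (d - 1)) = 1 - 1 / d := by
        have : (d : ℝ) - 1 ≠ 0 := by linarith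
        field_simp
      rw [he]
      refine (hiso A hne).trans ?_
      rw [← nsmul_one, ← Finset.sum_const]
      have hbT : intBdry G A ⊆ T := (Finset.filter_subset _ _).trans (hA.trans hST)
      have hterm : ∀ x y, 0 ≤ ω x y * (ω x y)⁻¹ *
          |(A : Set V).indicator (1 : V → ℝ) x - (A : Set V).indicator (1 : V → ℝ) y| :=
        fun x y => mul_nonneg (mul_nonneg (hω x y) (inv_nonneg.2 (hω x y))) (abs_nonneg _)
      refine le_trans (Finset.sum_le_sum fun z hz => ?_)
        (Finset.sum_le_sum_of_subset_of_nonneg hbT fun x _ _ =>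
          Finset.sum_nonneg fun y _ => hterm x y)
      obtain ⟨hzA, y, hyA, hzy⟩ := Finset.mem_filter.1 hz
      have hyT : y ∈ T := hnbrT z (hSn (hA hzA)) ((hnbr z y).2 hzy)
      refine le_trans (le_of_eq ?_) (Finset.single_le_sum (fun y _ => hterm z y) hyT)
      rw [mul_inv_cancel₀ (hpos z y hzy).ne']
      simp [hzA, hyA])
    f hf0 (fun x hx => by simp [hf, hηS x hx])
  -- the energy side
  have hcac := caccioppoli T ω hω hsymm (δ := 1 / ((σ - σ') * n) ^ 2) ha0 ha1 u η hu hη0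
    (fun x _ hx => hL x (hSn (by_contra fun h => hx (hηS x h))))
    (fun x y => by
      by_cases h : G.Adj x y
      · refine mul_le_mul_of_nonneg_left ?_ (hω x y)
        have h1 := abs_cutoff_sub_le hcut (G.dist x₀ x) (G.dist x₀ y)
        have h2 : |(G.dist x₀ x : ℝ) - G.dist x₀ y| ≤ 1 := by
          have i1 : (G.dist x₀ y : ℝ) ≤ G.dist x₀ x + 1 := by exact_mod_cast hadj h
          have i2 : (G.dist x₀ x : ℝ) ≤ G.dist x₀ y + 1 := by exact_mod_cast hadj h.symm
          rw [abs_le]; constructor <;> linarith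
        have h3 : |η x - η y| ≤ 1 / ((σ - σ') * n) := by
          refine h1.trans ?_
          rw [← sub_mul]
          exact div_le_div_of_nonneg_right h2 (mul_nonneg (by linarith) hn0.le)
        rw [← sq_abs, ← one_div_pow]
        exact pow_le_pow_left₀ (abs_nonneg _) h3 2
      · rw [hzero x y h]; simp)
  have hHol : ∑ x ∈ T, (if η x = 0 then 0 else (∑ y ∈ T, ω x y) * u x ^ (2 * a)) ≤
      (∑ x ∈ ball x₀ n, mu nbr ω x ^ p) ^ (1 / p) *
        (∑ x ∈ S, u x ^ (β * p' / ρ)) ^ (1 / p') := by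
    rw [← Finset.sum_subset hST fun x _ hx => by rw [if_pos (hηS x hx)]]
    calc _ ≤ ∑ x ∈ S, mu nbr ω x * u x ^ (2 * a) := by
          refine Finset.sum_le_sum fun x hx => ?_
          rw [hmu x (hSn hx)]
          split_ifs
          · exact mul_nonneg (hmu0 x) (Real.rpow_nonneg (hu x).le _)
          · exact le_rfl
      _ ≤ (∑ x ∈ S, mu nbr ω x ^ p) ^ (1 / p) *
            (∑ x ∈ S, (u x ^ (2 * a)) ^ p') ^ (1 / p') :=
          Real.inner_le_Lp_mul_Lq_of_nonneg S hp (fun x _ => hmu0 x)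
            (fun x _ => Real.rpow_nonneg (hu x).le _)
      _ = (∑ x ∈ S, mu nbr ω x ^ p) ^ (1 / p) *
            (∑ x ∈ S, u x ^ (β * p' / ρ)) ^ (1 / p') := by
          congr 2
          refine Finset.sum_congr rfl fun x _ => ?_
          rw [← Real.rpow_mul (hu x).le, ha]
          congr 1
          field_simp
      _ ≤ _ := by
          refine mul_le_mul_of_nonneg_right (Real.rpow_le_rpow
            (Finset.sum_nonneg fun x _ => Real.rpow_nonneg (hmu0 x) _)
            (Finset.sum_le_sum_of_subset_of_nonneg hSn fun x _ _ => Real.rpow_nonneg (hmu0 x) _)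
            (one_div_nonneg.2 hp.nonneg)) ?_
          exact Real.rpow_nonneg (Finset.sum_nonneg fun x _ => Real.rpow_nonneg (hu x).le _) _
  have hNle : (∑ x ∈ S, (∑ y ∈ T, (ω x y)⁻¹) ^ q) ^ (1 / q) ≤
      (∑ x ∈ ball x₀ n, nu nbr ω x ^ q) ^ (1 / q) := by
    rw [Finset.sum_congr rfl fun x hx => by rw [hnu x (hSn hx)]]
    exact Real.rpow_le_rpow
      (Finset.sum_nonneg fun x _ => Real.rpow_nonneg (hnu0 x) _)
      (Finset.sum_le_sum_of_subset_of_nonneg hSn fun x _ _ => Real.rpow_nonneg (hnu0 x) _)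
      (one_div_nonneg.2 hq.nonneg)
  have hlow : ∑ x ∈ ball x₀ (σ' * n), u x ^ β ≤ ∑ x ∈ S, f x ^ (2 * ρ) := by
    have hsub : ball x₀ (σ' * n) ⊆ S := fun x hx => by
      rw [hball] at hx; rw [hS, hball]; linarith
    refine le_trans (le_of_eq ?_) (Finset.sum_le_sum_of_subset_of_nonneg hsub
      fun x _ _ => Real.rpow_nonneg (hf0 x) _)
    refine Finset.sum_congr rfl fun x hx => ?_
    have h1 : η x = 1 := cutoff_eq_one hcut ((hball _ _ _).1 hx)
    rw [hf]
    simp only [h1, one_mul]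
    rw [← Real.rpow_mul (hu x).le, ha]
    congr 1
    field_simp
  have hE := hcac.trans (mul_le_mul_of_nonneg_left hHol (by positivity))
  have hN0 : 0 ≤ (∑ x ∈ ball x₀ n, nu nbr ω x ^ q) ^ (1 / q) :=
    Real.rpow_nonneg (Finset.sum_nonneg fun x _ => Real.rpow_nonneg (hnu0 x) _) _
  have hE0 : 0 ≤ ∑ x ∈ T, ∑ y ∈ T, ω x y * (f x - f y) ^ 2 :=
    Finset.sum_nonneg fun x _ => Finset.sum_nonneg fun y _ => mul_nonneg (hω x y) (sq_nonneg _)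
  calc c ^ 2 * (∑ x ∈ ball x₀ (σ' * n), u x ^ β) ^ (1 / ρ)
      ≤ c ^ 2 * (∑ x ∈ S, f x ^ (2 * ρ)) ^ (1 / ρ) := by
        refine mul_le_mul_of_nonneg_left (Real.rpow_le_rpow
          (Finset.sum_nonneg fun x _ => Real.rpow_nonneg (hu x).le _) hlow (by positivity))
          (by positivity)
    _ ≤ _ := hsob
    _ ≤ 4 * (1 + ρ / q') ^ 2 * (∑ x ∈ ball x₀ n, nu nbr ω x ^ q) ^ (1 / q) *
          (48 * (1 / ((σ - σ') * n) ^ 2) * ((∑ x ∈ ball x₀ n, mu nbr ω x ^ p) ^ (1 / p) *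
        (∑ x ∈ S, u x ^ (β * p' / ρ)) ^ (1 / p'))) :=
        mul_le_mul (mul_le_mul_of_nonneg_left hNle (by positivity)) hE hE0
          (mul_nonneg (by positivity) hN0)
    _ = _ := by ring

theorem nrm_nonneg {V : Type*} (A : Finset V) (s : ℝ) (f : V → ℝ) : 0 ≤ nrm A s f :=
  Real.rpow_nonneg (mul_nonneg (by positivity)
    (Finset.sum_nonneg fun x _ => Real.rpow_nonneg (abs_nonneg _) _)) _

theorem nrm_le_nrm_of_le {V : Type*} {A : Finset V} (hA : A.Nonempty) {s t : ℝ} (hs : 0 < s)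
    (hst : s ≤ t) (f : V → ℝ) : nrm A s f ≤ nrm A t f := by
  have hc : (0 : ℝ) < A.card := by exact_mod_cast hA.card_pos
  have ht : 0 < t := by linarith
  have h := Real.rpow_arith_mean_le_arith_mean_rpow A (fun _ => (A.card : ℝ)⁻¹)
    (fun x => |f x| ^ s) (fun _ _ => by positivity) (by simp [hc.ne'])
    (fun _ _ => Real.rpow_nonneg (abs_nonneg _) _) (p := t / s) ((one_le_div hs).2 hst)
  simp only [← Finset.mul_sum] at h
  have e : ∀ x, (|f x| ^ s) ^ (t / s) = |f x| ^ t := fun x => by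
    rw [← Real.rpow_mul (abs_nonneg _), mul_div_cancel₀ t hs.ne']
  simp only [e] at h
  have h0 : 0 ≤ (A.card : ℝ)⁻¹ * ∑ x ∈ A, |f x| ^ s := mul_nonneg (by positivity)
    (Finset.sum_nonneg fun x _ => Real.rpow_nonneg (abs_nonneg _) _)
  have h2 := Real.rpow_le_rpow (Real.rpow_nonneg h0 _) h (show 0 ≤ 1 / t by positivity)
  rw [← Real.rpow_mul h0] at h2
  have e2 : t / s * (1 / t) = 1 / s := by field_simp
  rw [e2] at h2
  exact h2

theorem nrm_le_nrmE {V : Type*} {A : Finset V} (hA : A.Nonempty) {s : ℝ} (hs : 0 < s)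
    {p : ℝ≥0∞} (hsp : ENNReal.ofReal s ≤ p) (f : V → ℝ) : nrm A s f ≤ nrmE A p f := by
  unfold nrmE
  split_ifs with hp
  · have hc : (0 : ℝ) < A.card := by exact_mod_cast hA.card_pos
    set M := sSup ((fun x => |f x|) '' (A : Set V)) with hM
    have hle : ∀ x ∈ A, |f x| ≤ M := fun x hx =>
      le_csSup ((A.finite_toSet.image _).bddAbove) ⟨x, hx, rfl⟩
    obtain ⟨z, hz⟩ := hA
    have hM0 : 0 ≤ M := (abs_nonneg _).trans (hle z hz)
    have h1 : (A.card : ℝ)⁻¹ * ∑ x ∈ A, |f x| ^ s ≤ M ^ s := by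
      rw [inv_mul_le_iff₀ hc, ← nsmul_eq_mul]
      exact Finset.sum_le_card_nsmul _ _ _ fun x hx =>
        Real.rpow_le_rpow (abs_nonneg _) (hle x hx) hs.le
    have h2 := Real.rpow_le_rpow (mul_nonneg (by positivity)
      (Finset.sum_nonneg fun x _ => Real.rpow_nonneg (abs_nonneg (f x)) s)) h1
      (show 0 ≤ 1 / s by positivity)
    rwa [← Real.rpow_mul hM0, mul_one_div_cancel hs.ne', Real.rpow_one] at h2
  · exact nrm_le_nrm_of_le hA hs ((ENNReal.ofReal_le_iff_le_toReal hp).1 hsp) f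

theorem sum_rpow_eq_card_mul_nrm {V : Type*} {A : Finset V} (hA : A.Nonempty) {s : ℝ}
    (hs : 0 < s) (t : ℝ) {f : V → ℝ} (hf : ∀ x, 0 ≤ f x) :
    (∑ x ∈ A, f x ^ s) ^ t = (A.card : ℝ) ^ t * nrm A s f ^ (s * t) := by
  have hc : (0 : ℝ) < A.card := by exact_mod_cast hA.card_pos
  have h0 : 0 ≤ (A.card : ℝ)⁻¹ * ∑ x ∈ A, f x ^ s := mul_nonneg (by positivity)
    (Finset.sum_nonneg fun x _ => Real.rpow_nonneg (hf x) _)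
  unfold nrm
  simp only [abs_of_nonneg (hf _)]
  rw [← Real.rpow_mul h0, ← mul_assoc, one_div_mul_cancel hs.ne', one_mul,
    ← Real.mul_rpow hc.le h0, mul_inv_cancel_left₀ hc.ne']

/-- Balls around a common centre with comparable radii have comparable volumes. -/
theorem card_ball_le {V : Type*} (ball : V → ℝ → Finset V) {d : ℕ} {Creg : ℝ} (hCreg : 1 ≤ Creg)
    (hreg : ∀ (x : V) (r : ℝ), 1 ≤ r →
      Creg⁻¹ * r ^ d ≤ ((ball x r).card : ℝ) ∧ ((ball x r).card : ℝ) ≤ Creg * r ^ d)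
    (x₀ : V) {n σ : ℝ} (hn : 1 ≤ n) (hσ : 1 / 2 ≤ σ) (hne : (ball x₀ (σ * n)).Nonempty) :
    ((ball x₀ n).card : ℝ) ≤ Creg ^ 2 * 2 ^ d * (ball x₀ (σ * n)).card := by
  have hb := (hreg x₀ n hn).2
  have h1 : (1 : ℝ) ≤ (ball x₀ (σ * n)).card := by exact_mod_cast hne.card_pos
  have hC0 : 0 < Creg := by linarith
  rcases le_or_gt 1 (σ * n) with h | h
  · have h2 := (hreg x₀ (σ * n) h).1
    rw [inv_mul_le_iff₀ hC0] at h2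
    have h3 : n ^ d ≤ 2 ^ d * (σ * n) ^ d := by
      rw [← mul_pow]
      exact pow_le_pow_left₀ (by linarith) (by nlinarith) d
    calc _ ≤ Creg * n ^ d := hb
      _ ≤ Creg * (2 ^ d * (Creg * (ball x₀ (σ * n)).card)) := by gcongr; exact h3.trans (by gcongr)
      _ = _ := by ring
  · have h3 : n ^ d ≤ 2 ^ d := pow_le_pow_left₀ (by linarith) (by nlinarith) d
    calc _ ≤ Creg * n ^ d := hb
      _ ≤ Creg * 2 ^ d := by gcongr
      _ ≤ Creg ^ 2 * 2 ^ d * 1 := by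
        have : Creg ≤ Creg ^ 2 := by nlinarith
        rw [mul_one]; gcongr
      _ ≤ _ := by gcongr

/-- One step of the iteration. -/
theorem nrm_le_of_superharmonic {V : Type*} (G : SimpleGraph V) (nbr : V → Finset V)
    (hnbr : ∀ x y, y ∈ nbr x ↔ G.Adj x y) (hconn : G.Connected) (ball : V → ℝ → Finset V)
    (hball : ∀ (x : V) (r : ℝ) (y : V), y ∈ ball x r ↔ (G.dist x y : ℝ) ≤ r)
    {d : ℕ} (hd : 2 ≤ d) {Creg c : ℝ} (hCreg : 1 ≤ Creg) (hc : 0 < c)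
    (hreg : ∀ (x : V) (r : ℝ), 1 ≤ r →
      Creg⁻¹ * r ^ d ≤ ((ball x r).card : ℝ) ∧ ((ball x r).card : ℝ) ≤ Creg * r ^ d)
    (hiso : ∀ A : Finset V, A.Nonempty →
      c * (A.card : ℝ) ^ (1 - 1 / (d : ℝ)) ≤ ((intBdry G A).card : ℝ))
    (ω : V → V → ℝ) (hsymm : ∀ x y, ω x y = ω y x) (hpos : ∀ x y, G.Adj x y → 0 < ω x y)
    (hzero : ∀ x y, ¬ G.Adj x y → ω x y = 0) {p p' q q' ρ : ℝ} (hp : p.HolderConjugate p')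
    (hq : q.HolderConjugate q') (hρ : 0 < ρ) (hρ' : 1 / ρ = 1 - 2 / d + 1 / q)
    (x₀ : V) {n : ℝ} (hn : 1 ≤ n) (u : V → ℝ) (hu : ∀ x, 0 < u x)
    (hsuper : ∀ x ∈ ball x₀ n, lap nbr ω u x ≤ 0) {β : ℝ} (hβ : 0 < β) (hβρ : β ≤ ρ / 2)
    {σ' σ : ℝ} (hσ' : 1 / 2 ≤ σ') (hσσ : σ' < σ) (hσ1 : σ ≤ 1) :
    nrm (ball x₀ (σ' * n)) β u ≤
      (192 * (1 + ρ / q') ^ 2 / c ^ 2 * (Creg ^ 2 * 2 ^ d) ^ (1 / ρ) * Creg ^ (2 / (d : ℝ)) *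
        (nrm (ball x₀ n) p (mu nbr ω) * nrm (ball x₀ n) q (nu nbr ω)) /
          (σ - σ') ^ 2) ^ (ρ / β) * nrm (ball x₀ (σ * n)) (β / (ρ / p')) u := by
  have hn0 : 0 < n := by linarith
  have hs0 : 0 < σ - σ' := by linarith
  have hC0 : 0 < Creg := by linarith
  have hp0 := hp.pos
  have hp'0 := hp.symm.pos
  have hq0 := hq.pos
  have hq'0 := hq.symm.pos
  have hd0 : (0 : ℝ) < d := by positivity
  have hω : ∀ x y, 0 ≤ ω x y := fun x y => by
    by_cases h : G.Adj x y
    · exact (hpos x y h).le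
    · exact (hzero x y h).ge
  have hmu0 : ∀ x, 0 ≤ mu nbr ω x := fun x => Finset.sum_nonneg fun y _ => hω x y
  have hnu0 : ∀ x, 0 ≤ nu nbr ω x := fun x =>
    Finset.sum_nonneg fun y _ => inv_nonneg.2 (hω x y)
  have hne : ∀ r : ℝ, 0 ≤ r → (ball x₀ r).Nonempty := fun r hr =>
    ⟨x₀, by rw [hball, SimpleGraph.dist_self]; simpa using hr⟩
  have h := sum_rpow_le_of_superharmonic G nbr hnbr hconn ball hball hd hc hiso ω hsymm hpos hzero
    hp hq hρ hρ' x₀ hn u hu hsuper hβ hβρ hσσ hσ1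
  have hexp : β / (ρ / p') = β * p' / ρ := by field_simp
  rw [hexp]
  have hne1 := hne (σ' * n) (by nlinarith)
  have hne2 := hne (σ * n) (by nlinarith)
  have hne3 := hne n hn0.le
  have hvol := card_ball_le ball hCreg hreg x₀ hn hσ' hne1
  rw [sum_rpow_eq_card_mul_nrm hne1 hβ _ fun x => (hu x).le,
    sum_rpow_eq_card_mul_nrm hne2 (by positivity) _ fun x => (hu x).le,
    sum_rpow_eq_card_mul_nrm hne3 hp0 _ hmu0, sum_rpow_eq_card_mul_nrm hne3 hq0 _ hnu0,
    mul_one_div_cancel hp0.ne', mul_one_div_cancel hq0.ne', Real.rpow_one, Real.rpow_one,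
    show β * p' / ρ * (1 / p') = β * (1 / ρ) by field_simp] at h
  have hbσ : ((ball x₀ (σ * n)).card : ℝ) ≤ (ball x₀ n).card := by
    norm_cast
    refine Finset.card_le_card fun x hx => ?_
    rw [hball] at hx ⊢
    nlinarith
  have hbn := (hreg x₀ n hn).2
  set b' : ℝ := ((ball x₀ (σ' * n)).card : ℝ) with hb'
  set bσ : ℝ := ((ball x₀ (σ * n)).card : ℝ) with hbσ'
  set b : ℝ := ((ball x₀ n).card : ℝ) with hb
  have hb'0 : 0 < b' := by rw [hb']; exact_mod_cast hne1.card_pos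
  have hb0 : 0 < b := by rw [hb]; exact_mod_cast hne3.card_pos
  set m := nrm (ball x₀ n) p (mu nbr ω)
  set v := nrm (ball x₀ n) q (nu nbr ω)
  have hm0 : 0 ≤ m := nrm_nonneg _ _ _
  have hv0 : 0 ≤ v := nrm_nonneg _ _ _
  set X := nrm (ball x₀ (σ' * n)) β u
  set Y := nrm (ball x₀ (σ * n)) (β * p' / ρ) u
  have hX0 : 0 ≤ X := nrm_nonneg _ _ _
  have hY0 : 0 ≤ Y := nrm_nonneg _ _ _
  set Kv := (Creg ^ 2 * 2 ^ d) ^ (1 / ρ)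
  set Kd := Creg ^ (2 / (d : ℝ))
  set Ks := 192 * (1 + ρ / q') ^ 2
  have hKs : 0 ≤ Ks := by positivity
  have hvolp : b ^ (1 / p) * b ^ (1 / q) * bσ ^ (1 / p') ≤ Kv * b' ^ (1 / ρ) * (Kd * n ^ 2) := by
    have h1 : bσ ^ (1 / p') ≤ b ^ (1 / p') :=
      Real.rpow_le_rpow (by positivity) hbσ (by positivity)
    have h2 : b ^ (1 / p) * b ^ (1 / q) * b ^ (1 / p') = b ^ (1 / ρ) * b ^ (2 / (d : ℝ)) := by
      rw [← Real.rpow_add hb0, ← Real.rpow_add hb0, ← Real.rpow_add hb0]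
      congr 1
      have := hp.inv_add_inv_eq_one
      rw [hρ', one_div, one_div p']
      linarith
    have h3 : b ^ (1 / ρ) ≤ Kv * b' ^ (1 / ρ) := by
      rw [← Real.mul_rpow (by positivity) hb'0.le]
      exact Real.rpow_le_rpow hb0.le hvol (by positivity)
    have h4 : b ^ (2 / (d : ℝ)) ≤ Kd * n ^ 2 := by
      have e : (n ^ d) ^ (2 / (d : ℝ)) = n ^ 2 := by
        rw [← Real.rpow_natCast, ← Real.rpow_mul hn0.le, mul_div_cancel₀ _ hd0.ne', Real.rpow_two]
      rw [← e, ← Real.mul_rpow hC0.le (by positivity)]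
      exact Real.rpow_le_rpow hb0.le hbn (by positivity)
    calc _ ≤ b ^ (1 / p) * b ^ (1 / q) * b ^ (1 / p') := by gcongr
      _ = _ := h2
      _ ≤ _ := by gcongr
  have hkey : X ^ (β * (1 / ρ)) ≤
      Ks / c ^ 2 * Kv * Kd * (m * v) / (σ - σ') ^ 2 * Y ^ (β * (1 / ρ)) := by
    have hpos1 : 0 < c ^ 2 * b' ^ (1 / ρ) := by positivity
    refine le_of_mul_le_mul_left ?_ hpos1
    calc c ^ 2 * b' ^ (1 / ρ) * X ^ (β * (1 / ρ))
        = c ^ 2 * (b' ^ (1 / ρ) * X ^ (β * (1 / ρ))) := by ring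
      _ ≤ _ := h
      _ = Ks / ((σ - σ') * n) ^ 2 * (m * v) * Y ^ (β * (1 / ρ)) *
          (b ^ (1 / p) * b ^ (1 / q) * bσ ^ (1 / p')) := by ring
      _ ≤ Ks / ((σ - σ') * n) ^ 2 * (m * v) * Y ^ (β * (1 / ρ)) *
          (Kv * b' ^ (1 / ρ) * (Kd * n ^ 2)) := by gcongr
      _ = _ := by field_simp
  have hfin := Real.rpow_le_rpow (Real.rpow_nonneg hX0 _) hkey (show 0 ≤ ρ / β by positivity)
  have e1 : β * (1 / ρ) * (ρ / β) = 1 := by field_simp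
  rwa [Real.mul_rpow (by positivity) (Real.rpow_nonneg hY0 _), ← Real.rpow_mul hX0,
    ← Real.rpow_mul hY0, e1, Real.rpow_one, Real.rpow_one] at hfin

/-- Iterating a one-step bound along the exponents `β / χ ^ k`, halving the gap each time. -/
theorem iterate_exponent_bound (Φ : ℝ → ℝ → ℝ) (hΦ : ∀ β σ, 0 ≤ Φ β σ) {ρ χ A β₀ : ℝ}
    (hρ : 0 < ρ) (hχ : 1 < χ) (hA : 0 < A)
    (hstep : ∀ β, 0 < β → β ≤ β₀ → ∀ σ' σ, 1 / 2 ≤ σ' → σ' < σ → σ ≤ 1 →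
      Φ β σ' ≤ (A / (σ - σ') ^ 2) ^ (ρ / β) * Φ (β / χ) σ) (K : ℕ) {β : ℝ}
    (hβ : 0 < β) (hβ₀ : β ≤ β₀) {σ' σ : ℝ} (h1 : 1 / 2 ≤ σ') (h2 : σ' < σ) (h3 : σ ≤ 1) :
    Φ β σ' ≤ (A * 4 ^ (1 + 1 / (χ - 1)) / (σ - σ') ^ 2) ^
      (ρ / (χ - 1) * (χ ^ (K + 1) - 1) / β) * Φ (β / χ ^ (K + 1)) σ := by
  have hχ1 : 0 < χ - 1 := by linarith
  have hχ0 : 0 < χ := by linarith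
  induction K generalizing σ with
  | zero =>
    refine (hstep β hβ hβ₀ σ' σ h1 h2 h3).trans ?_
    have e : ρ / (χ - 1) * (χ ^ (0 + 1) - 1) / β = ρ / β := by
      rw [zero_add, pow_one]; field_simp
    rw [e, zero_add, pow_one]
    refine mul_le_mul_of_nonneg_right (Real.rpow_le_rpow (by positivity) ?_ (by positivity))
      (hΦ _ _)
    refine div_le_div_of_nonneg_right ?_ (sq_nonneg _)
    exact le_mul_of_one_le_right hA.le (Real.one_le_rpow (by norm_num) (by positivity))
  | succ K ih =>
    have hs : 0 < σ - σ' := by linarith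
    set τ := (σ' + σ) / 2 with hτ
    have i1 := ih (σ := τ) (by rw [hτ]; linarith) (by rw [hτ]; linarith)
    have i2 := hstep (β / χ ^ (K + 1)) (by positivity)
      ((div_le_self hβ.le (one_le_pow₀ hχ.le)).trans hβ₀) τ σ (by rw [hτ]; linarith)
      (by rw [hτ]; linarith) h3
    have e0 : β / χ ^ (K + 1) / χ = β / χ ^ (K + 1 + 1) := by
      rw [div_div, ← pow_succ]
    rw [e0] at i2
    refine i1.trans ((mul_le_mul_of_nonneg_left i2 (Real.rpow_nonneg (by positivity) _)).trans ?_)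
    rw [← mul_assoc]
    refine mul_le_mul_of_nonneg_right ?_ (hΦ _ _)
    set Y := A * 4 ^ (1 + 1 / (χ - 1)) / (σ - σ') ^ 2 with hY
    have hY0 : 0 < Y := by positivity
    set L := χ ^ (K + 1) with hL
    have b1 : A * 4 ^ (1 + 1 / (χ - 1)) / (τ - σ') ^ 2 = Y * 4 := by
      rw [hY, hτ, show (σ' + σ) / 2 - σ' = (σ - σ') / 2 by ring]
      field_simp
      norm_num
    have b2 : A / (σ - τ) ^ 2 = Y * 4 ^ (-(1 / (χ - 1))) := by
      have : (4 : ℝ) ^ (1 + 1 / (χ - 1)) * 4 ^ (-(1 / (χ - 1))) = 4 := by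
        rw [← Real.rpow_add (by norm_num)]; simp
      rw [hY, hτ, show σ - (σ' + σ) / 2 = (σ - σ') / 2 by ring, div_mul_eq_mul_div, mul_assoc,
        this]
      field_simp
      norm_num
    rw [b1, b2, Real.mul_rpow hY0.le (by norm_num), Real.mul_rpow hY0.le (by positivity),
      ← Real.rpow_mul (by norm_num : (0 : ℝ) ≤ 4)]
    have e3 : ρ / (χ - 1) * (χ ^ (K + 1 + 1) - 1) / β =
        ρ / (χ - 1) * (L - 1) / β + ρ / (β / L) := by
      have : χ ^ (K + 1 + 1) = L * χ := by rw [pow_succ]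
      rw [this]; field_simp; ring
    rw [e3, Real.rpow_add hY0]
    have e4 : (4 : ℝ) ^ (ρ / (χ - 1) * (L - 1) / β) * 4 ^ (-(1 / (χ - 1)) * (ρ / (β / L))) ≤ 1 := by
      rw [← Real.rpow_add (by norm_num)]
      refine Real.rpow_le_one_of_one_le_of_nonpos (by norm_num) ?_
      have : ρ / (χ - 1) * (L - 1) / β + -(1 / (χ - 1)) * (ρ / (β / L)) =
          -(ρ / (χ - 1) / β) := by
        field_simp; ring
      rw [this]
      have : 0 < ρ / (χ - 1) / β := by positivity
      linarith
    calc _ = Y ^ (ρ / (χ - 1) * (L - 1) / β) * Y ^ (ρ / (β / L)) *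
          ((4 : ℝ) ^ (ρ / (χ - 1) * (L - 1) / β) * 4 ^ (-(1 / (χ - 1)) * (ρ / (β / L)))) := by ring
      _ ≤ _ := mul_le_of_le_one_right (by positivity) e4

/-- The total exponent accumulated along the iteration. -/
theorem iteration_exponent_le {k χ α β : ℝ} (hk : 0 ≤ k) (hχ : 0 < χ) (hα : 0 < α) (hβ : 0 < β)
    (hαβ : α ≤ β / 2) {K : ℕ} (hK : χ ^ K ≤ β / α) :
    k * (χ ^ (K + 1) - 1) / β ≤ 2 * (k * χ) * (1 / α - 1 / β) := by
  have h1 : χ ^ (K + 1) / β ≤ χ / α := by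
    rw [pow_succ, div_le_div_iff₀ hβ hα]
    rw [le_div_iff₀ hα] at hK
    nlinarith
  have h2 : 1 / β ≤ 1 / α / 2 := by
    rw [div_div, one_div_le_one_div hβ (by positivity)]; linarith
  have h3 : 0 < 1 / β := by positivity
  calc k * (χ ^ (K + 1) - 1) / β
      = k * (χ ^ (K + 1) / β - 1 / β) := by ring
    _ ≤ k * (χ * (2 * (1 / α - 1 / β))) := by
        refine mul_le_mul_of_nonneg_left ?_ hk
        have h4 : χ / α ≤ χ * (2 * (1 / α - 1 / β)) := by
          rw [div_eq_mul_one_div]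
          exact mul_le_mul_of_nonneg_left (by linarith) hχ.le
        linarith
    _ = _ := by ring

/-- Integrability exponents may be lowered to finite ones without leaving the admissible range. -/
theorem exists_finite_exponents {d : ℕ} (hd : 2 ≤ d) {p q : ℝ≥0∞} (hp : 1 < p) (hq : 1 < q)
    (hpq : p⁻¹ + q⁻¹ < 2 / (d : ℝ≥0∞)) :
    ∃ s t : ℝ, 1 < s ∧ 1 < t ∧ ENNReal.ofReal s ≤ p ∧ ENNReal.ofReal t ≤ q ∧
      s⁻¹ + t⁻¹ < 2 / (d : ℝ) ∧ ((1 - p⁻¹)⁻¹).toReal ≤ (1 - s⁻¹)⁻¹ := by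
  have hp1 : p⁻¹ < 1 := ENNReal.inv_lt_one.2 hp
  have hq1 : q⁻¹ < 1 := ENNReal.inv_lt_one.2 hq
  obtain ⟨a, ha0, hpa⟩ : ∃ a : ℝ, 0 ≤ a ∧ p⁻¹ = ENNReal.ofReal a :=
    ⟨p⁻¹.toReal, ENNReal.toReal_nonneg, (ENNReal.ofReal_toReal hp1.ne_top).symm⟩
  obtain ⟨b, hb0, hqb⟩ : ∃ b : ℝ, 0 ≤ b ∧ q⁻¹ = ENNReal.ofReal b :=
    ⟨q⁻¹.toReal, ENNReal.toReal_nonneg, (ENNReal.ofReal_toReal hq1.ne_top).symm⟩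
  have hd0 : (0 : ℝ) < d := by positivity
  have ha1 : a < 1 := by
    rw [hpa] at hp1; exact ENNReal.ofReal_lt_one.1 hp1
  have hb1 : b < 1 := by
    rw [hqb] at hq1; exact ENNReal.ofReal_lt_one.1 hq1
  have hab : a + b < 2 / d := by
    have e : (2 / (d : ℝ≥0∞)) = ENNReal.ofReal (2 / d) := by
      rw [ENNReal.ofReal_div_of_pos hd0]; simp
    rw [hpa, hqb, ← ENNReal.ofReal_add ha0 hb0, e] at hpq
    exact (ENNReal.ofReal_lt_ofReal_iff (by positivity)).1 hpq
  obtain ⟨ε, hε0, hε⟩ : ∃ ε : ℝ, 0 < ε ∧ ε < min (min (1 - a) (1 - b)) ((2 / d - a - b) / 2) :=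
    exists_between (lt_min (lt_min (by linarith) (by linarith)) (by linarith))
  rw [lt_min_iff, lt_min_iff] at hε
  obtain ⟨⟨h1, h2⟩, h3⟩ := hε
  have key : ∀ {p : ℝ≥0∞} {a : ℝ}, 0 ≤ a → p⁻¹ = ENNReal.ofReal a →
      ENNReal.ofReal (a + ε)⁻¹ ≤ p := fun {p a} ha h => by
    rw [ENNReal.ofReal_inv_of_pos (by linarith), ENNReal.inv_le_iff_inv_le, h]
    exact ENNReal.ofReal_le_ofReal (by linarith)
  refine ⟨(a + ε)⁻¹, (b + ε)⁻¹, (one_lt_inv₀ (by linarith)).2 (by linarith),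
    (one_lt_inv₀ (by linarith)).2 (by linarith), key ha0 hpa, key hb0 hqb, ?_, ?_⟩
  · rw [inv_inv, inv_inv]; linarith
  · rw [inv_inv, hpa, ENNReal.toReal_inv, ← ENNReal.ofReal_one, ← ENNReal.ofReal_sub _ ha0,
      ENNReal.toReal_ofReal (by linarith)]
    exact inv_anti₀ (by linarith) (by linarith)

end RCM

open RCM in
/-- **Reverse Moser iteration for superharmonic functions.** -/
theorem reverse_moser_iteration_superharmonic
    (d : ℕ) (hd : 2 ≤ d) (Creg Criso : ℝ) (hCreg : 0 < Creg) (hCriso : 0 < Criso)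
    (p q : ℝ≥0∞) (hp : 1 < p) (hq : 1 < q) (hpq : p⁻¹ + q⁻¹ < 2 / (d : ℝ≥0∞)) :
    ∃ C₆ κ : ℝ, 0 < C₆ ∧ 0 < κ ∧
      ∀ (V : Type) (G : SimpleGraph V) (nbr : V → Finset V)
        (_ : ∀ x y, y ∈ nbr x ↔ G.Adj x y)
        (_ : Infinite V) (_ : G.Connected)
        (ball : V → ℝ → Finset V)
        (_ : ∀ (x : V) (r : ℝ) (y : V), y ∈ ball x r ↔ (G.dist x y : ℝ) ≤ r)
        (_ : ∀ (x : V) (r : ℝ), 1 ≤ r →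
              Creg⁻¹ * r ^ d ≤ ((ball x r).card : ℝ) ∧ ((ball x r).card : ℝ) ≤ Creg * r ^ d)
        (_ : ∀ (x : V) (r : ℝ) (A : Finset V), 1 ≤ r → A.Nonempty → A ⊆ ball x r →
              (A.card : ℝ) < ((ball x r).card : ℝ) / 2 →
              Criso / r ≤ ((RCM.relBdry G (ball x r) A).card : ℝ) / (A.card : ℝ))
        (ω : V → V → ℝ)
        (_ : ∀ x y, ω x y = ω y x)
        (_ : ∀ x y, G.Adj x y → 0 < ω x y)
        (_ : ∀ x y, ¬ G.Adj x y → ω x y = 0)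
        (x₀ : V) (n : ℝ) (_ : 1 ≤ n)
        (u : V → ℝ) (_ : ∀ x, 0 < u x)
        (_ : ∀ x ∈ ball x₀ n, lap nbr ω u x ≤ 0)
        (β : ℝ) (_ : 0 < β) (_ : β < ((1 - p⁻¹)⁻¹).toReal / 2)
        (α : ℝ) (_ : 0 < α) (_ : α < β / 2)
        (σ' σ : ℝ) (_ : 1 / 2 ≤ σ') (_ : σ' < σ) (_ : σ ≤ 1),
        nrm (ball x₀ (σ' * n)) β u ≤
          (C₆ * max 1 (nrmE (ball x₀ n) p (mu nbr ω) * nrmE (ball x₀ n) q (nu nbr ω)) /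
              (σ - σ') ^ 2) ^ (κ * (1 / α - 1 / β)) *
            nrm (ball x₀ (σ * n)) α u := by
  obtain ⟨s, t, hs1, ht1, hsp, htq, hst, hpstar⟩ := exists_finite_exponents hd hp hq hpq
  have hd0 : (0 : ℝ) < d := by positivity
  have hd2 : (2 : ℝ) ≤ d := by exact_mod_cast hd
  have hs0 : 0 < s := by linarith
  have ht0 : 0 < t := by linarith
  have hs := Real.HolderConjugate.conjExponent hs1
  have ht := Real.HolderConjugate.conjExponent ht1
  set s' := s.conjExponent
  set t' := t.conjExponent
  have hs'0 : 0 < s' := hs.symm.pos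
  have ht'0 : 0 < t' := ht.symm.pos
  have hs'eq : s'⁻¹ = 1 - s⁻¹ := by linarith [hs.inv_add_inv_eq_one]
  have h2d : 2 / (d : ℝ) ≤ 1 := by rw [div_le_one hd0]; exact hd2
  have hρi : 0 < 1 - 2 / (d : ℝ) + 1 / t := by
    have : 0 < 1 / t := by positivity
    linarith
  obtain ⟨ρ, hρ0, hρ⟩ : ∃ ρ : ℝ, 0 < ρ ∧ 1 / ρ = 1 - 2 / d + 1 / t :=
    ⟨1 / (1 - 2 / d + 1 / t), by positivity, by rw [one_div_one_div]⟩
  have hχ : 1 < ρ / s' := by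
    rw [one_lt_div hs'0]
    refine (inv_lt_inv₀ hρ0 hs'0).1 ?_
    rw [← one_div, hρ, hs'eq, one_div]
    linarith
  set χ := ρ / s' with hχdef
  have hχ1 : 0 < χ - 1 := by linarith
  have hχ0 : 0 < χ := by linarith
  set Cr := max 1 Creg with hCr
  have hCr1 : 1 ≤ Cr := le_max_left _ _
  have hCr0 : 0 < Cr := by linarith
  set c := Criso / (Cr ^ 2 * (4 * Cr) ^ (1 / (d : ℝ))) with hc
  have hc0 : 0 < c := by positivity
  set C₀ := 192 * (1 + ρ / t') ^ 2 / c ^ 2 * (Cr ^ 2 * 2 ^ d) ^ (1 / ρ) * Cr ^ (2 / (d : ℝ))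
    with hC₀
  have hC₀0 : 0 < C₀ := by positivity
  refine ⟨(1 + C₀) * 4 ^ (1 + 1 / (χ - 1)), 2 * (ρ / (χ - 1) * χ), by positivity, by positivity, ?_⟩
  intro V G nbr hnbr _ hconn ball hball hreg hiso ω hsymm hpos hzero x₀ n hn u hu hsuper β hβ hβp
    α hα hαβ σ' σ hσ' hσσ hσ1
  have hn0 : 0 < n := by linarith
  have hreg' : ∀ (x : V) (r : ℝ), 1 ≤ r →
      Cr⁻¹ * r ^ d ≤ ((ball x r).card : ℝ) ∧ ((ball x r).card : ℝ) ≤ Cr * r ^ d := by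
    intro x r hr
    have hr0 : 0 ≤ r ^ d := by positivity
    exact ⟨(mul_le_mul_of_nonneg_right (inv_anti₀ hCreg (le_max_right _ _)) hr0).trans
      (hreg x r hr).1, (hreg x r hr).2.trans
        (mul_le_mul_of_nonneg_right (le_max_right _ _) hr0)⟩
  have hisoG := isoperimetric G (by lia : 1 ≤ d) hCr1 hCriso ball hball hreg' hiso
  have hne : ∀ r : ℝ, 0 ≤ r → (ball x₀ r).Nonempty := fun r hr =>
    ⟨x₀, by rw [hball, SimpleGraph.dist_self]; simpa using hr⟩
  set M := max 1 (nrmE (ball x₀ n) p (mu nbr ω) * nrmE (ball x₀ n) q (nu nbr ω)) with hM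
  have hM1 : 1 ≤ M := le_max_left _ _
  have hmv : nrm (ball x₀ n) s (mu nbr ω) * nrm (ball x₀ n) t (nu nbr ω) ≤ M := by
    have h1 := nrm_le_nrmE (hne n hn0.le) hs0 hsp (mu nbr ω)
    have h2 := nrm_le_nrmE (hne n hn0.le) ht0 htq (nu nbr ω)
    exact (mul_le_mul h1 h2 (nrm_nonneg _ _ _) ((nrm_nonneg _ _ _).trans h1)).trans
      (le_max_right _ _)
  have hβρ : β ≤ ρ / 2 := by
    have h1 : (1 - s⁻¹)⁻¹ = s' := by rw [← hs'eq, inv_inv]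
    rw [h1] at hpstar
    have h2 : s' ≤ ρ := by rw [hχdef, one_lt_div hs'0] at hχ; exact hχ.le
    linarith
  have hA : 0 < (1 + C₀) * M := by positivity
  have hiter := iterate_exponent_bound (fun b τ => nrm (ball x₀ (τ * n)) b u)
    (fun _ _ => nrm_nonneg _ _ _) hρ0 hχ hA (β₀ := ρ / 2) (fun b hb hbρ τ' τ h1 h2 h3 => by
      refine (nrm_le_of_superharmonic G nbr hnbr hconn ball hball hd hCr1 hc0 hreg' hisoG ω hsymm
        hpos hzero hs ht hρ0 hρ x₀ hn u hu hsuper hb hbρ h1 h2 h3).trans ?_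
      refine mul_le_mul_of_nonneg_right (Real.rpow_le_rpow ?_ ?_ (by positivity))
        (nrm_nonneg _ _ _)
      · exact div_nonneg (mul_nonneg hC₀0.le (mul_nonneg (nrm_nonneg _ _ _) (nrm_nonneg _ _ _)))
          (sq_nonneg _)
      · refine div_le_div_of_nonneg_right ?_ (sq_nonneg _)
        exact (mul_le_mul_of_nonneg_left hmv hC₀0.le).trans
          (mul_le_mul_of_nonneg_right (by linarith) (by linarith)))
  obtain ⟨K, hK1, hK2⟩ : ∃ K : ℕ, χ ^ K ≤ β / α ∧ β / α < χ ^ (K + 1) :=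
    exists_nat_pow_near ((one_le_div hα).2 (by linarith)) hχ
  have hmain := hiter K hβ hβρ hσ' hσσ hσ1
  have hexpα : β / χ ^ (K + 1) ≤ α := by
    rw [div_lt_iff₀ hα] at hK2
    rw [div_le_iff₀ (by positivity)]
    linarith
  have hjen : nrm (ball x₀ (σ * n)) (β / χ ^ (K + 1)) u ≤ nrm (ball x₀ (σ * n)) α u :=
    nrm_le_nrm_of_le (hne _ (by nlinarith)) (by positivity) hexpα u
  have hbase : (1 + C₀) * 4 ^ (1 + 1 / (χ - 1)) * M / (σ - σ') ^ 2 =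
      (1 + C₀) * M * 4 ^ (1 + 1 / (χ - 1)) / (σ - σ') ^ 2 := by ring
  have hge : 1 ≤ (1 + C₀) * M * 4 ^ (1 + 1 / (χ - 1)) / (σ - σ') ^ 2 := by
    rw [one_le_div (pow_pos (sub_pos.2 hσσ) 2)]
    have h1 : (σ - σ') ^ 2 ≤ 1 := pow_le_one₀ (by linarith) (by linarith)
    have h2 : (1 : ℝ) ≤ 4 ^ (1 + 1 / (χ - 1)) := Real.one_le_rpow (by norm_num) (by positivity)
    exact h1.trans (one_le_mul_of_one_le_of_one_le
      (one_le_mul_of_one_le_of_one_le (by linarith) hM1) h2)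
  have hexp := iteration_exponent_le (div_pos hρ0 hχ1).le hχ0 hα hβ hαβ.le hK1
  rw [hbase]
  exact hmain.trans (mul_le_mul (Real.rpow_le_rpow_of_exponent_le hge hexp) hjen
    (nrm_nonneg _ _ _) (Real.rpow_nonneg (by linarith) _))
end
end

section
/- Logarithmic energy estimate: let B ⊂ V be a finite connected set, let η : V → ℝ satisfy η = 0 outside B, 0 ≤ η ≤ 1 and η ≡ 0 on ∂B, and let K ≥ 1 satisfy η(y)² ≤ K·η(x)² for every {x,y} ∈ E with η(x) ≠ 0. Then for every u : V → (0,∞) with (L_Y^ω u)(x) ≤ 0 for all x ∈ B: E^{ω,η}(ln u)/|B| ≤ 8·K·‖∇η‖²_{ℓ∞(E)}·‖μ^ω‖_{1,B}. -/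
open Finset MeasureTheory
open scoped ENNReal

noncomputable section

lemma sq_le_exp_add_exp_neg_sub_two (s : ℝ) : s ^ 2 ≤ Real.exp s + Real.exp (-s) - 2 := by
  have h1 : |s / 2| ≤ |Real.sinh (s / 2)| := by
    rw [Real.abs_sinh]
    exact Real.self_le_sinh_iff.2 (abs_nonneg _)
  have h2 := Real.cosh_two_mul (s / 2)
  rw [Real.cosh_sq, mul_div_cancel₀ s two_ne_zero, Real.cosh_eq] at h2
  linarith [sq_le_sq.2 h1]

/-- The weighted logarithmic difference is controlled by `|a - b|` when `a, b > 0`. -/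
lemma min_sq_mul_log_sub_log_sq_le {a b : ℝ} (ha : 0 < a) (hb : 0 < b) :
    min (a ^ 2) (b ^ 2) * (Real.log a - Real.log b) ^ 2 ≤ (a - b) ^ 2 := by
  wlog hab : a ≤ b generalizing a b
  · have := this hb ha (le_of_not_ge hab)
    rw [min_comm]
    nlinarith
  have h1 := Real.log_le_sub_one_of_pos (div_pos hb ha)
  rw [Real.log_div hb.ne' ha.ne'] at h1
  have h2 := Real.log_le_log ha hab
  have h3 : a * (Real.log b - Real.log a) ≤ b - a := by
    calc a * (Real.log b - Real.log a) ≤ a * (b / a - 1) := by gcongr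
      _ = b - a := by field_simp
  have h4 : 0 ≤ a * (Real.log b - Real.log a) := mul_nonneg ha.le (by linarith)
  rw [min_eq_left (by gcongr)]
  nlinarith

lemma min_sq_mul_log_sq_le {a b U W : ℝ} (ha : 0 ≤ a) (hb : 0 ≤ b) (hU : 0 < U) (hW : 0 < W) :
    min (a ^ 2) (b ^ 2) * (Real.log W - Real.log U) ^ 2 ≤
      2 * (a ^ 2 * ((W - U) / U) + b ^ 2 * ((U - W) / W)) + 4 * (a - b) ^ 2 := by
  have hWU : 0 < W / U := div_pos hW hU
  have hUW : 0 < U / W := div_pos hU hW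
  rw [sub_div, sub_div, div_self hU.ne', div_self hW.ne']
  rcases ha.eq_or_lt with rfl | ha
  · rw [min_eq_left (by simpa using sq_nonneg _)]
    nlinarith [mul_nonneg (sq_nonneg b) hUW.le, sq_nonneg b]
  rcases hb.eq_or_lt with rfl | hb
  · rw [min_eq_right (by simpa using sq_nonneg _)]
    nlinarith [mul_nonneg (sq_nonneg a) hWU.le, sq_nonneg a]
  have h1 := sq_le_exp_add_exp_neg_sub_two
    ((Real.log W - Real.log U) + (Real.log a - Real.log b))
  rw [neg_add, neg_sub, neg_sub, Real.exp_add, Real.exp_add, Real.exp_sub, Real.exp_sub,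
    Real.exp_sub, Real.exp_sub, Real.exp_log ha, Real.exp_log hb, Real.exp_log hU,
    Real.exp_log hW] at h1
  have h2 := mul_le_mul_of_nonneg_left h1 (mul_pos ha hb).le
  have h3 : a * b * (W / U * (a / b) + U / W * (b / a) - 2) =
      a ^ 2 * (W / U) + b ^ 2 * (U / W) - 2 * a * b := by field_simp
  rw [h3] at h2
  have h4 := min_sq_mul_log_sub_log_sq_le ha hb
  have h5 : min (a ^ 2) (b ^ 2) ≤ a * b := by
    rcases le_total a b with h | h
    · exact (min_le_left _ _).trans (by nlinarith)
    · exact (min_le_right _ _).trans (by nlinarith)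
  have h6 : 0 ≤ min (a ^ 2) (b ^ 2) := by positivity
  generalize min (a ^ 2) (b ^ 2) = m at *
  generalize Real.log W - Real.log U = t at *
  generalize Real.log a - Real.log b = l at *
  have h7 : m * (t + l) ^ 2 ≤ a * b * (t + l) ^ 2 := by gcongr
  nlinarith [mul_nonneg h6 (sq_nonneg (t + 2 * l))]

lemma sum_mul_sub_nonpos_of_lap_nonpos {V : Type*} {nbr : V → Finset V} {ω : V → V → ℝ}
    {u : V → ℝ} {x : V} (hpos : ∀ y ∈ nbr x, 0 < ω x y) (h : RCM.lap nbr ω u x ≤ 0) :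
    ∑ y ∈ nbr x, ω x y * (u y - u x) ≤ 0 := by
  rcases (nbr x).eq_empty_or_nonempty with he | hne
  · simp [he]
  · have hmu : 0 < (RCM.mu nbr ω x)⁻¹ := inv_pos.2 (Finset.sum_pos hpos hne)
    unfold RCM.lap at h
    exact nonpos_of_mul_nonpos_right h hmu

lemma abs_sub_le_gradSup {V : Type*} {G : SimpleGraph V} {η : V → ℝ}
    (hη01 : ∀ x, 0 ≤ η x ∧ η x ≤ 1) {x y : V} (h : G.Adj x y) :
    |η y - η x| ≤ RCM.gradSup G η := by
  refine le_csSup ⟨1, ?_⟩ ⟨x, y, h, rfl⟩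
  rintro r ⟨x, y, -, rfl⟩
  rw [abs_le]
  constructor <;> linarith [(hη01 x).1, (hη01 x).2, (hη01 y).1, (hη01 y).2]

lemma energyMin_eq_sum {V : Type*} {ω : V → V → ℝ} {η : V → ℝ} {B : Finset V}
    (hη : ∀ x ∉ B, η x = 0) (f : V → ℝ) :
    RCM.energyMin ω η f =
      (1 / 2) * ∑ x ∈ B, ∑ y ∈ B, min (η x ^ 2) (η y ^ 2) * ω x y * (f y - f x) ^ 2 := by
  unfold RCM.energyMin
  rw [tsum_eq_sum (s := B)]
  · congr 1
    refine Finset.sum_congr rfl fun x _ => tsum_eq_sum fun y hy => ?_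
    rw [hη y hy, min_eq_right (by simpa using sq_nonneg _)]
    simp
  · intro x hx
    have (y : V) : min (η x ^ 2) (η y ^ 2) = 0 := by
      rw [hη x hx, min_eq_left (by simpa using sq_nonneg _)]
      simp
    simp [this]

open RCM in
/-- **Logarithmic energy estimate** (Lemma 3.7). -/
theorem log_energy_estimate
    {V : Type*} (G : SimpleGraph V) (nbr : V → Finset V)
    (hnbr : ∀ x y, y ∈ nbr x ↔ G.Adj x y)
    (ω : V → V → ℝ)
    (hsymm : ∀ x y, ω x y = ω y x)
    (hpos : ∀ x y, G.Adj x y → 0 < ω x y)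
    (hzero : ∀ x y, ¬ G.Adj x y → ω x y = 0)
    (B : Finset V) (hBconn : (G.induce (B : Set V)).Connected)
    (η : V → ℝ)
    (hηsupp : ∀ x ∉ B, η x = 0)
    (hη01 : ∀ x, 0 ≤ η x ∧ η x ≤ 1)
    (hηbdry : ∀ x ∈ intBdry G B, η x = 0)
    (K : ℝ) (hK : 1 ≤ K)
    (hosc : ∀ x y, G.Adj x y → η x ≠ 0 → η y ^ 2 ≤ K * η x ^ 2)
    (u : V → ℝ) (hu : ∀ x, 0 < u x)
    (hsuper : ∀ x ∈ B, lap nbr ω u x ≤ 0) :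
    energyMin ω η (fun x => Real.log (u x)) / (B.card : ℝ) ≤
      8 * K * gradSup G η ^ 2 * nrm B 1 (mu nbr ω) := by
  have hω (x y : V) : 0 ≤ ω x y := by
    by_cases h : G.Adj x y
    · exact (hpos x y h).le
    · exact (hzero x y h).ge
  have hnbr_sum (x : V) (g : V → ℝ) (hx : nbr x ⊆ B) :
      ∑ y ∈ nbr x, ω x y * g y = ∑ y ∈ B, ω x y * g y := by
    refine Finset.sum_subset hx fun y _ hy => ?_
    rw [hzero x y (mt (hnbr x y).2 hy), zero_mul]
  have htest (x : V) (hx : x ∈ B) :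
      ∑ y ∈ B, ω x y * (η x ^ 2 * ((u y - u x) / u x)) ≤ 0 := by
    by_cases h0 : η x = 0
    · simp [h0]
    have hsub : nbr x ⊆ B := fun y hy => by
      by_contra hyB
      refine h0 (hηbdry x ?_)
      simp only [intBdry, Finset.mem_filter]
      exact ⟨hx, y, hyB, (hnbr x y).1 hy⟩
    have h1 := sum_mul_sub_nonpos_of_lap_nonpos
      (fun y hy => hpos x y ((hnbr x y).1 hy)) (hsuper x hx)
    rw [hnbr_sum x (fun y => u y - u x) hsub] at h1
    have h2 : ∑ y ∈ B, ω x y * (η x ^ 2 * ((u y - u x) / u x)) =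
        η x ^ 2 / u x * ∑ y ∈ B, ω x y * (u y - u x) := by
      rw [Finset.mul_sum]
      exact Finset.sum_congr rfl fun y _ => by ring
    rw [h2]
    exact mul_nonpos_of_nonneg_of_nonpos (div_nonneg (sq_nonneg _) (hu x).le) h1
  have hsum : ∑ x ∈ B, ∑ y ∈ B, ω x y * (η x ^ 2 * ((u y - u x) / u x)) ≤ 0 :=
    Finset.sum_nonpos htest
  have hswap : ∑ x ∈ B, ∑ y ∈ B, ω x y * (η y ^ 2 * ((u x - u y) / u y)) ≤ 0 := by
    rw [Finset.sum_comm]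
    simpa only [fun x y => hsymm y x] using hsum
  have hmu (x : V) : ∑ y ∈ B, ω x y ≤ mu nbr ω x := by
    classical
    rw [mu, ← Finset.sum_subset (Finset.inter_subset_left : B ∩ nbr x ⊆ B)]
    · exact Finset.sum_le_sum_of_subset_of_nonneg Finset.inter_subset_right
        fun y _ _ => hω x y
    · intro y hyB hy
      exact hzero x y fun h => hy (Finset.mem_inter.2 ⟨hyB, (hnbr x y).2 h⟩)
  have hmu0 (x : V) : 0 ≤ mu nbr ω x := Finset.sum_nonneg fun y _ => hω x y
  have hgrad : ∑ x ∈ B, ∑ y ∈ B, ω x y * (η x - η y) ^ 2 ≤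
      gradSup G η ^ 2 * ∑ x ∈ B, mu nbr ω x := by
    rw [Finset.mul_sum]
    refine Finset.sum_le_sum fun x _ => ?_
    calc ∑ y ∈ B, ω x y * (η x - η y) ^ 2
        ≤ ∑ y ∈ B, gradSup G η ^ 2 * ω x y := by
          refine Finset.sum_le_sum fun y _ => ?_
          by_cases h : G.Adj x y
          · rw [mul_comm]
            refine mul_le_mul_of_nonneg_right ?_ (hω x y)
            rw [← sq_abs, abs_sub_comm]
            gcongr
            exact abs_sub_le_gradSup hη01 h
          · simp [hzero x y h]
      _ ≤ gradSup G η ^ 2 * mu nbr ω x := by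
          rw [← Finset.mul_sum]
          exact mul_le_mul_of_nonneg_left (hmu x) (sq_nonneg _)
  have henergy : energyMin ω η (fun x => Real.log (u x)) ≤
      2 * (gradSup G η ^ 2 * ∑ x ∈ B, mu nbr ω x) := by
    rw [energyMin_eq_sum hηsupp]
    have h1 : ∑ x ∈ B, ∑ y ∈ B,
          min (η x ^ 2) (η y ^ 2) * ω x y * (Real.log (u y) - Real.log (u x)) ^ 2 ≤
        ∑ x ∈ B, ∑ y ∈ B, (2 * (ω x y * (η x ^ 2 * ((u y - u x) / u x))) +
          2 * (ω x y * (η y ^ 2 * ((u x - u y) / u y))) + 4 * (ω x y * (η x - η y) ^ 2)) := by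
      refine Finset.sum_le_sum fun x _ => Finset.sum_le_sum fun y _ => ?_
      have := mul_le_mul_of_nonneg_left
        (min_sq_mul_log_sq_le (hη01 x).1 (hη01 y).1 (hu x) (hu y)) (hω x y)
      linarith
    simp only [Finset.sum_add_distrib, ← Finset.mul_sum] at h1
    linarith
  have hnrm : nrm B 1 (mu nbr ω) = (B.card : ℝ)⁻¹ * ∑ x ∈ B, mu nbr ω x := by
    simp [nrm, abs_of_nonneg (hmu0 _)]
  have hM : 0 ≤ gradSup G η ^ 2 * ∑ x ∈ B, mu nbr ω x :=
    mul_nonneg (sq_nonneg _) (Finset.sum_nonneg fun x _ => hmu0 x)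
  calc energyMin ω η (fun x => Real.log (u x)) / (B.card : ℝ)
      ≤ (8 * K * (gradSup G η ^ 2 * ∑ x ∈ B, mu nbr ω x)) / (B.card : ℝ) := by
        gcongr
        nlinarith
    _ = 8 * K * gradSup G η ^ 2 * nrm B 1 (mu nbr ω) := by
        rw [hnrm]
        ring
end
end

section
/- Hölder continuity of harmonic functions from the elliptic Harnack inequality: suppose s ≥ 1, C ≥ 1, x₀ ∈ V and R, R₀ with R₀ ≥ 2R and R ≥ s are such that for every r ∈ [s, R₀] and every v : V → [0,∞) harmonic on B(x₀,r) one has max_{B(x₀,r/2)} v ≤ C·min_{B(x₀,r/2)} v. Then there exists c < ∞ depending only on C such that for every u : V → (0,∞) harmonic on B(x₀,R₀) and all x₁, x₂ ∈ B(x₀,R): |u(x₁) − u(x₂)| ≤ c·(R/R₀)^θ·max_{B(x₀,R₀/2)} u, where θ := ln(2C/(2C−1))/ln 2. -/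
open Finset MeasureTheory
open scoped ENNReal

noncomputable section

namespace RCM

/-- `lap` at `x` depends on `f` only up to an additive constant on `x` and its neighbours. -/
theorem lap_eq_of_eq_add_const {V : Type*} {nbr : V → Finset V} {ω : V → V → ℝ} {f g : V → ℝ}
    {x : V} {a : ℝ} (hx : f x = g x + a) (hn : ∀ y ∈ nbr x, f y = g y + a) :
    lap nbr ω f x = lap nbr ω g x := by
  unfold lap
  congr 1
  refine Finset.sum_congr rfl fun y hy => ?_
  rw [hx, hn y hy]
  ring

/-- One step of oscillation decay: if `u` is harmonic on `B(x₀, 2ρ)` and takes values in `[a, b]`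
on `B(x₀, 2ρ + 1)`, then the Harnack inequality on `B(x₀, 2ρ)` confines `u` on `B(x₀, ρ)` to an
interval shorter by the factor `(2C - 1) / (2C)`. -/
theorem exists_bounds_of_harnack {V : Type*} {G : SimpleGraph V} {nbr : V → Finset V}
    (hnbr : ∀ x y, y ∈ nbr x ↔ G.Adj x y) (hG : G.Connected) {ball : V → ℝ → Finset V}
    (hball : ∀ (x : V) (r : ℝ) (y : V), y ∈ ball x r ↔ (G.dist x y : ℝ) ≤ r)
    {ω : V → V → ℝ} {x₀ : V} {C ρ : ℝ} (hC : 1 ≤ C) (hρ : 0 ≤ ρ)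
    (hH : ∀ v : V → ℝ, (∀ x, 0 ≤ v x) → (∀ x ∈ ball x₀ (2 * ρ), lap nbr ω v x = 0) →
      sSup (v '' (ball x₀ ρ : Set V)) ≤ C * sInf (v '' (ball x₀ ρ : Set V)))
    {u : V → ℝ} (hu : ∀ x ∈ ball x₀ (2 * ρ), lap nbr ω u x = 0) {a b : ℝ}
    (hab : ∀ x ∈ ball x₀ (2 * ρ + 1), a ≤ u x ∧ u x ≤ b) :
    ∃ a' b', (∀ x ∈ ball x₀ ρ, a' ≤ u x ∧ u x ≤ b') ∧
      b' - a' ≤ (2 * C - 1) / (2 * C) * (b - a) := by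
  set v : V → ℝ := fun x => max (u x - a) 0 with hv
  have hmono : ∀ {r r' : ℝ}, r ≤ r' → ∀ x ∈ ball x₀ r, x ∈ ball x₀ r' := by
    intro r r' hr x hx
    rw [hball] at hx ⊢
    exact hx.trans hr
  have hveq : ∀ x ∈ ball x₀ (2 * ρ + 1), v x = u x + -a := by
    intro x hx
    have := (hab x hx).1
    rw [hv]
    simp only
    rw [max_eq_left (by linarith)]
    ring
  have hx₀ : x₀ ∈ ball x₀ ρ := by rw [hball]; simpa using hρ
  have hharm : ∀ x ∈ ball x₀ (2 * ρ), lap nbr ω v x = 0 := by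
    intro x hx
    rw [← hu x hx]
    refine lap_eq_of_eq_add_const (hveq x (hmono (by linarith) x hx)) fun y hy => hveq y ?_
    rw [hball] at hx ⊢
    have h1 : G.dist x y = 1 := SimpleGraph.dist_eq_one_iff_adj.mpr ((hnbr x y).mp hy)
    have h2 : G.dist x₀ y ≤ G.dist x₀ x + G.dist x y := hG.dist_triangle
    have h3 : (G.dist x₀ y : ℝ) ≤ G.dist x₀ x + 1 := by
      rw [h1] at h2
      exact_mod_cast h2
    linarith
  have hHv := hH v (fun x => le_max_right _ _) hharm
  have hfin : (v '' (ball x₀ ρ : Set V)).Finite := (ball x₀ ρ).finite_toSet.image v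
  set S := sSup (v '' (ball x₀ ρ : Set V))
  set I := sInf (v '' (ball x₀ ρ : Set V))
  have hS : S ≤ b - a := by
    refine csSup_le ⟨v x₀, x₀, hx₀, rfl⟩ ?_
    rintro _ ⟨x, hx, rfl⟩
    have hx' := hmono (show ρ ≤ 2 * ρ + 1 by linarith) x hx
    rw [hveq x hx']
    linarith [(hab x hx').2]
  have hvS : ∀ x ∈ ball x₀ ρ, v x ≤ S := fun x hx => le_csSup hfin.bddAbove ⟨x, hx, rfl⟩
  have hIv : ∀ x ∈ ball x₀ ρ, I ≤ v x := fun x hx => csInf_le hfin.bddBelow ⟨x, hx, rfl⟩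
  have hS0 : 0 ≤ S := (le_max_right _ _).trans (hvS x₀ hx₀)
  refine ⟨a + I, a + S, fun x hx => ?_, ?_⟩
  · have h1 := hvS x hx
    have h2 := hIv x hx
    rw [hveq x (hmono (by linarith) x hx)] at h1 h2
    constructor <;> linarith
  · rw [div_mul_eq_mul_div, le_div_iff₀ (by linarith)]
    nlinarith [mul_nonneg (show (0 : ℝ) ≤ 2 * C - 1 by linarith) (sub_nonneg.mpr hS)]

/-- Iterated oscillation decay over `n` scales; the radii `ρ` satisfy `ρ ↦ 2ρ + 1`. -/
theorem exists_bounds_of_harnack_iterate {V : Type*} {G : SimpleGraph V} {nbr : V → Finset V}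
    (hnbr : ∀ x y, y ∈ nbr x ↔ G.Adj x y) (hG : G.Connected) {ball : V → ℝ → Finset V}
    (hball : ∀ (x : V) (r : ℝ) (y : V), y ∈ ball x r ↔ (G.dist x y : ℝ) ≤ r)
    {ω : V → V → ℝ} {x₀ : V} {C s R₀ : ℝ} (hC : 1 ≤ C) (hs : 0 ≤ s)
    (hH : ∀ r ∈ Set.Icc s R₀, ∀ v : V → ℝ, (∀ x, 0 ≤ v x) →
      (∀ x ∈ ball x₀ r, lap nbr ω v x = 0) →
      sSup (v '' (ball x₀ (r / 2) : Set V)) ≤ C * sInf (v '' (ball x₀ (r / 2) : Set V)))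
    {u : V → ℝ} (hu : ∀ x ∈ ball x₀ R₀, lap nbr ω u x = 0) {a b : ℝ} (n : ℕ) :
    ∀ ρ : ℝ, s ≤ ρ → 2 ^ n * (ρ + 1) - 1 ≤ R₀ →
      (∀ x ∈ ball x₀ (2 ^ n * (ρ + 1) - 1), a ≤ u x ∧ u x ≤ b) →
      ∃ a' b', (∀ x ∈ ball x₀ ρ, a' ≤ u x ∧ u x ≤ b') ∧
        b' - a' ≤ ((2 * C - 1) / (2 * C)) ^ n * (b - a) := by
  induction n with
  | zero =>
    intro ρ _ _ hab
    refine ⟨a, b, fun x hx => hab x ?_, by simp⟩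
    simpa using hx
  | succ n ih =>
    intro ρ hρ hR hab
    have hrad : (2 : ℝ) ^ (n + 1) * (ρ + 1) - 1 = 2 ^ n * ((2 * ρ + 1) + 1) - 1 := by ring
    rw [hrad] at hR hab
    obtain ⟨a₁, b₁, hab₁, hlen₁⟩ := ih (2 * ρ + 1) (by linarith) hR hab
    have hpow : (1 : ℝ) ≤ 2 ^ n := one_le_pow₀ (by norm_num)
    have hle : 2 * ρ ≤ R₀ := by nlinarith
    obtain ⟨a₂, b₂, hab₂, hlen₂⟩ := exists_bounds_of_harnack hnbr hG hball hC (hs.trans hρ)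
      (fun v hv hharm => by
        have := hH (2 * ρ) ⟨by linarith, hle⟩ v hv hharm
        rwa [mul_div_cancel_left₀ ρ two_ne_zero] at this)
      (fun x hx => hu x (by rw [hball] at hx ⊢; exact hx.trans hle)) hab₁
    refine ⟨a₂, b₂, hab₂, hlen₂.trans ?_⟩
    rw [pow_succ', mul_assoc]
    exact mul_le_mul_of_nonneg_left hlen₁ (div_nonneg (by linarith) (by linarith))

/-- With `θ = log (2C / (2C - 1)) / log 2`, the factor `(2C - 1) / (2C)` is `(1 / 2) ^ θ`. -/
theorem decay_pow_eq_rpow {C : ℝ} (hC : 1 ≤ C) (n : ℕ) :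
    ((2 * C - 1) / (2 * C)) ^ n =
      ((2 : ℝ) ^ n)⁻¹ ^ (Real.log (2 * C / (2 * C - 1)) / Real.log 2) := by
  have hq : 0 < 2 * C / (2 * C - 1) := div_pos (by linarith) (by linarith)
  have h2 : (2 : ℝ) ^ (Real.log (2 * C / (2 * C - 1)) / Real.log 2) = 2 * C / (2 * C - 1) := by
    rw [Real.log_div_log]
    exact Real.rpow_logb (by norm_num) (by norm_num) hq
  rw [Real.inv_rpow (by positivity), ← Real.rpow_pow_comm (by norm_num), h2, ← inv_pow, inv_div]

end RCM

open RCM in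
/-- **Hölder continuity of harmonic functions from the elliptic Harnack inequality.** -/
theorem holder_continuity_harmonic (C : ℝ) (hC : 1 ≤ C) :
    ∃ c : ℝ, 0 < c ∧
      ∀ (V : Type) (G : SimpleGraph V) (nbr : V → Finset V)
        (_ : ∀ x y, y ∈ nbr x ↔ G.Adj x y)
        (_ : Infinite V) (_ : G.Connected)
        (ball : V → ℝ → Finset V)
        (_ : ∀ (x : V) (r : ℝ) (y : V), y ∈ ball x r ↔ (G.dist x y : ℝ) ≤ r)
        (ω : V → V → ℝ)
        (_ : ∀ x y, ω x y = ω y x)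
        (_ : ∀ x y, G.Adj x y → 0 < ω x y)
        (_ : ∀ x y, ¬ G.Adj x y → ω x y = 0)
        (x₀ : V) (s R R₀ : ℝ) (_ : 1 ≤ s) (_ : s ≤ R) (_ : 2 * R ≤ R₀)
        (_ : ∀ r ∈ Set.Icc s R₀, ∀ v : V → ℝ, (∀ x, 0 ≤ v x) →
              (∀ x ∈ ball x₀ r, lap nbr ω v x = 0) →
              sSup (v '' (ball x₀ (r / 2) : Set V)) ≤
                C * sInf (v '' (ball x₀ (r / 2) : Set V)))
        (u : V → ℝ) (_ : ∀ x, 0 < u x)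
        (_ : ∀ x ∈ ball x₀ R₀, lap nbr ω u x = 0),
        ∀ x₁ ∈ ball x₀ R, ∀ x₂ ∈ ball x₀ R,
          |u x₁ - u x₂| ≤
            c * (R / R₀) ^ (Real.log (2 * C / (2 * C - 1)) / Real.log 2) *
              sSup (u '' (ball x₀ (R₀ / 2) : Set V)) := by
  have hθ : 0 ≤ Real.log (2 * C / (2 * C - 1)) / Real.log 2 := by
    refine div_nonneg (Real.log_nonneg ?_) (Real.log_nonneg (by norm_num))
    rw [le_div_iff₀ (by linarith)]
    linarith
  refine ⟨8 ^ (Real.log (2 * C / (2 * C - 1)) / Real.log 2), by positivity, ?_⟩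
  intro V G nbr hnbr _ hG ball hball ω _ _ _ x₀ s R R₀ hs hsR hRR₀ hH u hupos hu x₁ hx₁ x₂ hx₂
  have hfin : (u '' (ball x₀ (R₀ / 2) : Set V)).Finite :=
    (ball x₀ (R₀ / 2)).finite_toSet.image u
  set M := sSup (u '' (ball x₀ (R₀ / 2) : Set V))
  have huM : ∀ x ∈ ball x₀ (R₀ / 2), u x ≤ M := fun x hx => le_csSup hfin.bddAbove ⟨x, hx, rfl⟩
  have hM : 0 ≤ M := (hupos x₁).le.trans <| huM x₁ <| by
    rw [hball] at hx₁ ⊢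
    linarith
  obtain ⟨n, hn, hn'⟩ := exists_nat_pow_near
    (show 1 ≤ (R₀ / 2 + 1) / (R + 1) by rw [le_div_iff₀ (by linarith)]; linarith)
    (show (1 : ℝ) < 2 by norm_num)
  rw [le_div_iff₀ (by linarith)] at hn
  rw [div_lt_iff₀ (by linarith), pow_succ] at hn'
  obtain ⟨a, b, hab, hlen⟩ := exists_bounds_of_harnack_iterate (a := 0) (b := M) hnbr hG hball hC
    (by linarith) hH hu n R hsR (by linarith) (fun x hx => ⟨(hupos x).le, huM x (by
      rw [hball] at hx ⊢
      linarith)⟩)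
  have hosc : |u x₁ - u x₂| ≤ b - a := by
    obtain ⟨h1, h2⟩ := hab x₁ hx₁
    obtain ⟨h3, h4⟩ := hab x₂ hx₂
    rw [abs_le]
    constructor <;> linarith
  rw [sub_zero, decay_pow_eq_rpow hC] at hlen
  refine (hosc.trans hlen).trans (mul_le_mul_of_nonneg_right ?_ hM)
  rw [← Real.mul_rpow (by norm_num) (div_nonneg (by linarith) (by linarith))]
  refine Real.rpow_le_rpow (by positivity) ?_ hθ
  have hpow : (0 : ℝ) < 2 ^ n := by positivity
  rw [← mul_div_assoc, inv_le_iff_one_le_mul₀ hpow, div_mul_eq_mul_div,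
    le_div_iff₀ (by linarith)]
  nlinarith [mul_le_mul_of_nonneg_left (hs.trans hsR) hpow.le]
end
end

section
/- Parabolic energy estimates: let I = [s₁,s₂] ⊂ ℝ, let B ⊂ V be a finite connected set, let η : V → ℝ satisfy η = 0 outside B, 0 ≤ η ≤ 1 and η ≡ 0 on ∂B, and let ζ : ℝ → [0,1] be continuously differentiable with ζ = 0 outside I and ζ(s₁) = 0. Let u : I × V → (0,∞) be sub-caloric on I × B. Then for every α ≥ 1: (a) ∫_I ζ(t)·E^ω_{η²}(u(t,·)^α)/|B| dt ≤ 64·α²·(‖∇η‖²_{ℓ∞(E)} + sup_{t∈I}|ζ′(t)|)·∫_I ‖u(t,·)^{2α}‖_{1,B,μ^ω} dt; and (b) max_{t∈I} ζ(t)·‖(η·u(t,·)^α)²‖_{1,B,μ^ω} ≤ 64·α²·(‖∇η‖²_{ℓ∞(E)} + sup_{t∈I}|ζ′(t)|)·∫_I ‖u(t,·)^{2α}‖_{1,B,μ^ω} dt. -/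
open Finset MeasureTheory
open scoped ENNReal

noncomputable section

namespace RCM

variable {V : Type*}

/-- The algebraic core of the edgewise energy inequality: `A` and `C` stand for `a ^ (α - 1)` and
`b ^ (α - 1)`. -/
lemma edge_ineq_of_le {a b A C α p q : ℝ} (ha : 0 < a) (hab : a ≤ b) (hA : 0 < A) (hAC : A ≤ C)
    (hα : 1 ≤ α) (hp : 0 ≤ p) (hq : 0 ≤ q) (hbern : C * b - A * a ≤ α * (C * (b - a))) :
    (p ^ 2 + q ^ 2) * (C * b - A * a) ^ 2 ≤
      4 * α * ((p ^ 2 * (C ^ 2 * b) - q ^ 2 * (A ^ 2 * a)) * (b - a)) +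
        8 * α ^ 2 * (p - q) ^ 2 * ((A * a) ^ 2 + (C * b) ^ 2) := by
  set D := C * b - A * a with hD
  have hC : 0 < C := hA.trans_le hAC
  have hb : 0 < b := ha.trans_le hab
  have hba : 0 ≤ b - a := sub_nonneg.2 hab
  have hD0 : 0 ≤ D := sub_nonneg.2 (mul_le_mul hAC hab ha.le hC.le)
  have hmain : D ^ 2 ≤ α * ((C ^ 2 * b - A ^ 2 * a) * (b - a)) := by
    have h1 : C * D ≤ C ^ 2 * b - A ^ 2 * a := by
      have := mul_nonneg (mul_nonneg hA.le ha.le) (sub_nonneg.2 hAC)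
      rw [hD]; linarith
    have h2 := mul_le_mul_of_nonneg_right hbern hD0
    have h3 := mul_le_mul_of_nonneg_left (mul_le_mul_of_nonneg_right h1 hba)
      (zero_le_one.trans hα)
    linarith
  have hcross : (C ^ 2 * b + A ^ 2 * a) * (b - a) ≤ 2 * (C * b * D) := by
    have h1 : C * (b - a) ≤ D := by
      have := mul_nonneg ha.le (sub_nonneg.2 hAC)
      rw [hD]; linarith
    have h2 : A ^ 2 * a ≤ C ^ 2 * b :=
      mul_le_mul (pow_le_pow_left₀ hA.le hAC 2) hab ha.le (by positivity)
    have h3 := mul_le_mul_of_nonneg_left h1 (mul_nonneg hC.le hb.le)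
    have h4 := mul_le_mul_of_nonneg_right h2 hba
    linarith
  have hsplit : (p ^ 2 * (C ^ 2 * b) - q ^ 2 * (A ^ 2 * a)) * (b - a) =
      (p ^ 2 + q ^ 2) / 2 * ((C ^ 2 * b - A ^ 2 * a) * (b - a)) +
        (p - q) * (p + q) / 2 * ((C ^ 2 * b + A ^ 2 * a) * (b - a)) := by ring
  have hlow : -(|p - q| * (p + q) * (C * b * D)) ≤
      (p - q) * (p + q) / 2 * ((C ^ 2 * b + A ^ 2 * a) * (b - a)) := by
    have h0 : 0 ≤ (C ^ 2 * b + A ^ 2 * a) * (b - a) := by positivity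
    have h1 := mul_le_mul_of_nonneg_left hcross
      (mul_nonneg (abs_nonneg (p - q)) (add_nonneg hp hq))
    have h2 := mul_le_mul_of_nonneg_right (neg_abs_le (p - q)) (mul_nonneg (add_nonneg hp hq) h0)
    linarith
  have hyoung : 4 * α * (|p - q| * (p + q) * (C * b * D)) ≤
      (p ^ 2 + q ^ 2) * D ^ 2 + 8 * α ^ 2 * (p - q) ^ 2 * (C * b) ^ 2 := by
    have h1 := sq_nonneg ((p + q) * D - 4 * α * (|p - q| * (C * b)))
    have h2 := mul_nonneg (sq_nonneg (p - q)) (sq_nonneg D)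
    have h3 : |p - q| ^ 2 = (p - q) ^ 2 := sq_abs _
    have h4 : ((p + q) * D - 4 * α * (|p - q| * (C * b))) ^ 2 =
        (p + q) ^ 2 * D ^ 2 - 8 * α * (|p - q| * (p + q) * (C * b * D)) +
          16 * α ^ 2 * (|p - q| ^ 2 * (C * b) ^ 2) := by ring
    rw [h4, h3] at h1
    linarith
  have h1 := mul_le_mul_of_nonneg_left hmain (add_nonneg (sq_nonneg p) (sq_nonneg q))
  have h2 := mul_le_mul_of_nonneg_left hlow (show (0 : ℝ) ≤ 4 * α by linarith)
  have h3 : 0 ≤ 8 * α ^ 2 * (p - q) ^ 2 * (A * a) ^ 2 := by positivity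
  rw [hsplit]
  linarith

lemma rpow_eq_rpow_sub_one_mul {a : ℝ} (ha : 0 < a) (α : ℝ) : a ^ α = a ^ (α - 1) * a := by
  rw [← Real.rpow_add_one ha.ne', sub_add_cancel]

lemma rpow_two_mul_sub_one {a : ℝ} (ha : 0 < a) (α : ℝ) :
    a ^ (2 * α - 1) = (a ^ (α - 1)) ^ 2 * a := by
  rw [sq, ← Real.rpow_add ha, ← Real.rpow_add_one ha.ne']
  congr 1; ring

lemma rpow_two_mul {a : ℝ} (ha : 0 < a) (α : ℝ) : a ^ (2 * α) = (a ^ α) ^ 2 := by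
  rw [sq, ← Real.rpow_add ha, two_mul]

/-- Bernoulli's inequality in the form `b ^ α - a ^ α ≤ α * b ^ (α - 1) * (b - a)`. -/
lemma rpow_sub_rpow_le {a b α : ℝ} (ha : 0 < a) (hb : 0 < b) (hα : 1 ≤ α) :
    b ^ α - a ^ α ≤ α * (b ^ (α - 1) * (b - a)) := by
  have h := one_add_mul_self_le_rpow_one_add (s := a / b - 1)
    (by have := div_pos ha hb; linarith) hα
  rw [add_sub_cancel, Real.div_rpow ha.le hb.le, le_div_iff₀ (Real.rpow_pos_of_pos hb α)] at h
  have h2 : (1 + α * (a / b - 1)) * b ^ α = b ^ α + α * (b ^ (α - 1) * (a - b)) := by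
    rw [rpow_eq_rpow_sub_one_mul hb α]
    field_simp
  rw [h2] at h
  linarith

/-- Edgewise energy inequality. -/
lemma edge_ineq {a b α p q : ℝ} (ha : 0 < a) (hb : 0 < b) (hα : 1 ≤ α) (hp : 0 ≤ p)
    (hq : 0 ≤ q) :
    (p ^ 2 + q ^ 2) * (b ^ α - a ^ α) ^ 2 ≤
      4 * α * ((p ^ 2 * b ^ (2 * α - 1) - q ^ 2 * a ^ (2 * α - 1)) * (b - a)) +
        8 * α ^ 2 * (p - q) ^ 2 * (a ^ (2 * α) + b ^ (2 * α)) := by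
  have key : ∀ {a b p q : ℝ}, 0 < a → a ≤ b → 0 ≤ p → 0 ≤ q →
      (p ^ 2 + q ^ 2) * (b ^ α - a ^ α) ^ 2 ≤
      4 * α * ((p ^ 2 * b ^ (2 * α - 1) - q ^ 2 * a ^ (2 * α - 1)) * (b - a)) +
        8 * α ^ 2 * (p - q) ^ 2 * (a ^ (2 * α) + b ^ (2 * α)) := by
    intro a b p q ha hab hp hq
    have hb := ha.trans_le hab
    have hbern := rpow_sub_rpow_le ha hb hα
    rw [rpow_two_mul_sub_one ha, rpow_two_mul_sub_one hb, rpow_two_mul ha, rpow_two_mul hb]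
    rw [rpow_eq_rpow_sub_one_mul ha α, rpow_eq_rpow_sub_one_mul hb α] at hbern ⊢
    exact edge_ineq_of_le ha hab (Real.rpow_pos_of_pos ha _)
      (Real.rpow_le_rpow ha.le hab (by linarith)) hα hp hq hbern
  rcases le_total a b with hab | hab
  · exact key ha hab hp hq
  · have := key hb hab hq hp
    linarith

lemma nrmW_one {A : Finset V} {φ f : V → ℝ} (hf : ∀ x ∈ A, 0 ≤ f x) :
    nrmW A 1 φ f = (A.card : ℝ)⁻¹ * ∑ x ∈ A, f x * φ x := by
  simp only [nrmW, Real.rpow_one, div_one]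
  congr 1
  exact Finset.sum_congr rfl fun x hx => by rw [abs_of_nonneg (hf x hx)]

lemma abs_sub_le_gradSup {G : SimpleGraph V} {η : V → ℝ} (hη01 : ∀ x, 0 ≤ η x ∧ η x ≤ 1)
    {x y : V} (h : G.Adj x y) : |η y - η x| ≤ gradSup G η := by
  refine le_csSup ⟨1, ?_⟩ ⟨x, y, h, rfl⟩
  rintro r ⟨x, y, -, rfl⟩
  have := hη01 x
  have := hη01 y
  rw [abs_le]
  constructor <;> linarith

/-- If the cutoff vanishes on the internal boundary of `B`, then no edge leaving `B` starts at a
point of its support. -/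
lemma eta_eq_zero_or_weight_eq_zero {G : SimpleGraph V} {ω : V → V → ℝ}
    (hzero : ∀ x y, ¬ G.Adj x y → ω x y = 0) {B : Finset V} {η : V → ℝ}
    (hηsupp : ∀ x ∉ B, η x = 0) (hηbdry : ∀ x ∈ intBdry G B, η x = 0) (x : V) {y : V}
    (hy : y ∉ B) : η x = 0 ∨ ω x y = 0 := by
  by_cases hx : x ∈ B
  · by_cases hadj : G.Adj x y
    · exact Or.inl (hηbdry x (by simpa [intBdry, hx] using ⟨y, hy, hadj⟩))
    · exact Or.inr (hzero x y hadj)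
  · exact Or.inl (hηsupp x hx)

lemma energySq_eq_sum {ω : V → V → ℝ} {B : Finset V} {η : V → ℝ}
    (hηsupp : ∀ x ∉ B, η x = 0) (hout : ∀ x, ∀ y ∉ B, η x = 0 ∨ ω x y = 0) (v : V → ℝ) :
    energySq ω η v =
      (1 / 2) * ∑ x ∈ B, ∑ y ∈ B, η x ^ 2 * ω x y * (v y - v x) ^ 2 := by
  rw [energySq, tsum_eq_sum (s := B) fun x hx => by simp [hηsupp x hx]]
  congr 1
  refine Finset.sum_congr rfl fun x _ => tsum_eq_sum fun y hy => ?_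
  rcases hout x y hy with h | h <;> simp [h]

lemma weight_nonneg {G : SimpleGraph V} {ω : V → V → ℝ} (hpos : ∀ x y, G.Adj x y → 0 < ω x y)
    (hzero : ∀ x y, ¬ G.Adj x y → ω x y = 0) (x y : V) : 0 ≤ ω x y := by
  by_cases h : G.Adj x y
  · exact (hpos x y h).le
  · exact (hzero x y h).ge

lemma mu_mul_lap {nbr : V → Finset V} {ω : V → V → ℝ} (hω : ∀ x y, 0 ≤ ω x y) (f : V → ℝ)
    (x : V) : mu nbr ω x * lap nbr ω f x = ∑ y ∈ nbr x, ω x y * (f y - f x) := by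
  by_cases h : mu nbr ω x = 0
  · have h0 := (Finset.sum_eq_zero_iff_of_nonneg fun y _ => hω x y).1 h
    rw [h, zero_mul, Finset.sum_eq_zero fun y hy => by rw [h0 y hy, zero_mul]]
  · rw [lap, mul_inv_cancel_left₀ h]

lemma sum_nbr_eq_sum {nbr : V → Finset V} {ω : V → V → ℝ} {B : Finset V} {x : V}
    (hnbr : ∀ y ∉ nbr x, ω x y = 0) (hout : ∀ y ∉ B, ω x y = 0) (g : V → ℝ) :
    ∑ y ∈ nbr x, ω x y * g y = ∑ y ∈ B, ω x y * g y := by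
  rw [← tsum_eq_sum (L := .unconditional V) fun y hy => by rw [hnbr y hy, zero_mul],
    ← tsum_eq_sum (L := .unconditional V) fun y hy => by rw [hout y hy, zero_mul]]

lemma sum_weight_le_mu {nbr : V → Finset V} {ω : V → V → ℝ} (hω : ∀ x y, 0 ≤ ω x y)
    (hnbr : ∀ x, ∀ y ∉ nbr x, ω x y = 0) (B : Finset V) (x : V) :
    ∑ y ∈ B, ω x y ≤ mu nbr ω x := by
  classical
  rw [mu, ← Finset.sum_subset (Finset.inter_subset_left (s₁ := B) (s₂ := nbr x)) fun y hy hy' =>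
    hnbr x y fun h => hy' (Finset.mem_inter.2 ⟨hy, h⟩)]
  exact Finset.sum_le_sum_of_subset_of_nonneg Finset.inter_subset_right fun y _ _ => hω x y

/-- Energy inequality at a fixed time: testing the Laplacian of `w` against `η² w ^ (2α - 1)`. -/
lemma energySq_add_sum_mul_lap_le {G : SimpleGraph V} {nbr : V → Finset V}
    (hnbr : ∀ x y, y ∈ nbr x ↔ G.Adj x y) {ω : V → V → ℝ}
    (hsymm : ∀ x y, ω x y = ω y x) (hpos : ∀ x y, G.Adj x y → 0 < ω x y)
    (hzero : ∀ x y, ¬ G.Adj x y → ω x y = 0) {B : Finset V} {η : V → ℝ}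
    (hηsupp : ∀ x ∉ B, η x = 0) (hη01 : ∀ x, 0 ≤ η x ∧ η x ≤ 1)
    (hηbdry : ∀ x ∈ intBdry G B, η x = 0) {w : V → ℝ} (hw : ∀ x, 0 < w x) {α : ℝ}
    (hα : 1 ≤ α) :
    energySq ω η (fun x => w x ^ α) +
        ∑ x ∈ B, η x ^ 2 * (2 * α * w x ^ (2 * α - 1)) * (mu nbr ω x * lap nbr ω w x) ≤
      4 * α ^ 2 * gradSup G η ^ 2 * ∑ x ∈ B, w x ^ (2 * α) * mu nbr ω x := by
  have hω := weight_nonneg hpos hzero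
  have hout : ∀ x, ∀ y ∉ B, η x = 0 ∨ ω x y = 0 := fun x y hy =>
    eta_eq_zero_or_weight_eq_zero hzero hηsupp hηbdry x hy
  have hnbr0 : ∀ x, ∀ y ∉ nbr x, ω x y = 0 := fun x y hy => hzero x y (mt (hnbr x y).2 hy)
  set f : V → V → ℝ := fun x y => ω x y * (η x ^ 2 * (w y ^ α - w x ^ α) ^ 2) with hf
  set g : V → V → ℝ := fun x y => ω x y * (η x ^ 2 * w x ^ (2 * α - 1) * (w y - w x)) with hg
  set h : V → V → ℝ := fun x y => ω x y * w x ^ (2 * α) with hh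
  have hE : energySq ω η (fun x => w x ^ α) = (1 / 2) * ∑ x ∈ B, ∑ y ∈ B, f x y := by
    rw [energySq_eq_sum hηsupp hout]
    congr 1
    exact Finset.sum_congr rfl fun x _ => Finset.sum_congr rfl fun y _ => by rw [hf]; ring
  have hL : ∑ x ∈ B, η x ^ 2 * (2 * α * w x ^ (2 * α - 1)) * (mu nbr ω x * lap nbr ω w x) =
      2 * α * ∑ x ∈ B, ∑ y ∈ B, g x y := by
    rw [Finset.mul_sum]
    refine Finset.sum_congr rfl fun x _ => ?_
    by_cases hx : η x = 0
    · simp [hg, hx]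
    · rw [mu_mul_lap hω, sum_nbr_eq_sum (hnbr0 x) fun y hy => (hout x y hy).resolve_left hx,
        Finset.mul_sum, Finset.mul_sum]
      exact Finset.sum_congr rfl fun y _ => by rw [hg]; ring
  have hR : ∑ x ∈ B, ∑ y ∈ B, h x y ≤ ∑ x ∈ B, w x ^ (2 * α) * mu nbr ω x := by
    refine Finset.sum_le_sum fun x _ => ?_
    rw [hh, ← Finset.sum_mul, mul_comm]
    exact mul_le_mul_of_nonneg_left (sum_weight_le_mu hω hnbr0 B x)
      (Real.rpow_nonneg (hw x).le _)
  have hedge : ∀ x y, f x y + f y x + 4 * α * (g x y + g y x) ≤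
      8 * α ^ 2 * gradSup G η ^ 2 * (h x y + h y x) := by
    intro x y
    by_cases hadj : G.Adj x y
    · have h1 := edge_ineq (hw x) (hw y) hα (hη01 y).1 (hη01 x).1
      have h2 : (η y - η x) ^ 2 ≤ gradSup G η ^ 2 := by
        rw [← sq_abs]
        exact pow_le_pow_left₀ (abs_nonneg _) (abs_sub_le_gradSup hη01 hadj) 2
      have h3 := mul_le_mul_of_nonneg_left h2
        (show 0 ≤ 8 * α ^ 2 * (w x ^ (2 * α) + w y ^ (2 * α)) from
          mul_nonneg (by positivity)
            (add_nonneg (Real.rpow_nonneg (hw x).le _) (Real.rpow_nonneg (hw y).le _)))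
      have h4 : (η y ^ 2 + η x ^ 2) * (w y ^ α - w x ^ α) ^ 2 -
          4 * α * ((η y ^ 2 * w y ^ (2 * α - 1) - η x ^ 2 * w x ^ (2 * α - 1)) * (w y - w x)) ≤
          8 * α ^ 2 * gradSup G η ^ 2 * (w x ^ (2 * α) + w y ^ (2 * α)) := by linarith
      have h5 := mul_le_mul_of_nonneg_left h4 (hω x y)
      simp only [hf, hg, hh, hsymm y x]
      linarith
    · simp [hf, hg, hh, hsymm y x, hzero x y hadj]
  have hsum := Finset.sum_le_sum fun x (_ : x ∈ B) =>
    Finset.sum_le_sum fun y (_ : y ∈ B) => hedge x y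
  have hswap : ∀ k : V → V → ℝ, ∑ x ∈ B, ∑ y ∈ B, k y x = ∑ x ∈ B, ∑ y ∈ B, k x y :=
    fun k => Finset.sum_comm
  simp only [Finset.sum_add_distrib, ← Finset.mul_sum] at hsum
  rw [hswap f, hswap g, hswap h] at hsum
  have hfin := mul_le_mul_of_nonneg_left hR
    (show 0 ≤ 4 * α ^ 2 * gradSup G η ^ 2 by positivity)
  rw [hE, hL]
  linarith

end RCM

open RCM in
/-- **Parabolic energy estimates** (Lemma 4.1). -/
theorem parabolic_energy_estimates
    {V : Type*} (G : SimpleGraph V) (nbr : V → Finset V)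
    (hnbr : ∀ x y, y ∈ nbr x ↔ G.Adj x y)
    (ω : V → V → ℝ)
    (hsymm : ∀ x y, ω x y = ω y x)
    (hpos : ∀ x y, G.Adj x y → 0 < ω x y)
    (hzero : ∀ x y, ¬ G.Adj x y → ω x y = 0)
    (s₁ s₂ : ℝ) (hs : s₁ ≤ s₂)
    (B : Finset V) (hBconn : (G.induce (B : Set V)).Connected)
    (η : V → ℝ)
    (hηsupp : ∀ x ∉ B, η x = 0)
    (hη01 : ∀ x, 0 ≤ η x ∧ η x ≤ 1)
    (hηbdry : ∀ x ∈ intBdry G B, η x = 0)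
    (ζ : ℝ → ℝ) (hζC1 : ContDiff ℝ 1 ζ)
    (hζ01 : ∀ t, 0 ≤ ζ t ∧ ζ t ≤ 1)
    (hζsupp : ∀ t ∉ Set.Icc s₁ s₂, ζ t = 0) (hζs₁ : ζ s₁ = 0)
    (u : ℝ → V → ℝ) (hu : ∀ t ∈ Set.Icc s₁ s₂, ∀ x, 0 < u t x)
    (hsub : SubCaloric nbr ω (Set.Icc s₁ s₂) (B : Set V) u)
    (α : ℝ) (hα : 1 ≤ α) :
    ((∫ t in s₁..s₂, ζ t * (energySq ω η (fun x => u t x ^ α) / (B.card : ℝ))) ≤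
      64 * α ^ 2 * (gradSup G η ^ 2 + sSup ((fun t => |deriv ζ t|) '' Set.Icc s₁ s₂)) *
        ∫ t in s₁..s₂, nrmW B 1 (mu nbr ω) (fun x => u t x ^ (2 * α))) ∧
    (sSup ((fun t => ζ t * nrmW B 1 (mu nbr ω) (fun x => (η x * u t x ^ α) ^ 2)) ''
        Set.Icc s₁ s₂) ≤
      64 * α ^ 2 * (gradSup G η ^ 2 + sSup ((fun t => |deriv ζ t|) '' Set.Icc s₁ s₂)) *
        ∫ t in s₁..s₂, nrmW B 1 (mu nbr ω) (fun x => u t x ^ (2 * α))) := by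
  have hω := weight_nonneg hpos hzero
  have hmu : ∀ x, 0 ≤ mu nbr ω x := fun x => Finset.sum_nonneg fun y _ => hω x y
  have hout : ∀ x, ∀ y ∉ B, η x = 0 ∨ ω x y = 0 := fun x y hy =>
    eta_eq_zero_or_weight_eq_zero hzero hηsupp hηbdry x hy
  have hdζ : Continuous (deriv ζ) := hζC1.continuous_deriv le_rfl
  set Z := sSup ((fun t => |deriv ζ t|) '' Set.Icc s₁ s₂)
  have hZle : ∀ t ∈ Set.Icc s₁ s₂, |deriv ζ t| ≤ Z := fun t ht =>
    le_csSup (isCompact_Icc.image hdζ.abs).bddAbove ⟨t, ht, rfl⟩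
  have hZ0 : 0 ≤ Z := Real.sSup_nonneg (by rintro _ ⟨t, -, rfl⟩; exact abs_nonneg _)
  set Γ := gradSup G η
  set N : ℝ → ℝ := fun t => nrmW B 1 (mu nbr ω) (fun x => u t x ^ (2 * α)) with hN
  set E : ℝ → ℝ := fun t => energySq ω η (fun x => u t x ^ α) / (B.card : ℝ) with hE
  set M : ℝ → ℝ := fun t => nrmW B 1 (mu nbr ω) (fun x => (η x * u t x ^ α) ^ 2) with hM
  have hNeq : ∀ t ∈ Set.Icc s₁ s₂,
      N t = (B.card : ℝ)⁻¹ * ∑ x ∈ B, u t x ^ (2 * α) * mu nbr ω x := fun t ht =>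
    nrmW_one fun x _ => Real.rpow_nonneg (hu t ht x).le _
  have hMeq : ∀ t ∈ Set.Icc s₁ s₂,
      M t = (B.card : ℝ)⁻¹ * ∑ x ∈ B, η x ^ 2 * u t x ^ (2 * α) * mu nbr ω x := by
    intro t ht
    rw [hM]
    simp only
    rw [nrmW_one fun x _ => sq_nonneg _]
    simp only [mul_pow, rpow_two_mul (hu t ht _)]
  have hEeq : ∀ t, E t = ((1 / 2) * ∑ x ∈ B, ∑ y ∈ B,
      η x ^ 2 * ω x y * (u t y ^ α - u t x ^ α) ^ 2) / (B.card : ℝ) := fun t => by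
    rw [hE]
    simp only
    rw [energySq_eq_sum hηsupp hout]
  have hcont : ∀ β : ℝ, ∀ x ∈ B, ContinuousOn (fun t => u t x ^ β) (Set.Icc s₁ s₂) := by
    intro β x hx
    refine ContinuousOn.rpow_const (fun t ht => ?_) fun t ht => Or.inl (hu t ht x).ne'
    obtain ⟨d, hd, -⟩ := hsub x hx t ht
    exact hd.continuousAt.continuousWithinAt
  have hNcont : ContinuousOn N (Set.Icc s₁ s₂) := by
    refine ContinuousOn.congr ?_ hNeq
    exact continuousOn_const.mul (continuousOn_finsetSum _ fun x hx =>
      (hcont _ x hx).mul continuousOn_const)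
  have hEcont : ContinuousOn E (Set.Icc s₁ s₂) := by
    refine ContinuousOn.congr ?_ fun t _ => hEeq t
    exact (continuousOn_const.mul (continuousOn_finsetSum _ fun x hx =>
      continuousOn_finsetSum _ fun y hy => continuousOn_const.mul
        (((hcont _ y hy).sub (hcont _ x hx)).pow 2))).div_const _
  have hN0 : ∀ t ∈ Set.Icc s₁ s₂, 0 ≤ N t := fun t ht => by
    rw [hNeq t ht]
    exact mul_nonneg (by positivity) (Finset.sum_nonneg fun x _ =>
      mul_nonneg (Real.rpow_nonneg (hu t ht x).le _) (hmu x))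
  have hM0 : ∀ t ∈ Set.Icc s₁ s₂, 0 ≤ M t := fun t ht => by
    rw [hMeq t ht]
    exact mul_nonneg (by positivity) (Finset.sum_nonneg fun x _ =>
      mul_nonneg (mul_nonneg (sq_nonneg _) (Real.rpow_nonneg (hu t ht x).le _)) (hmu x))
  have hE0 : ∀ t, 0 ≤ E t := fun t => by
    rw [hEeq t]
    exact div_nonneg (mul_nonneg (by norm_num) (Finset.sum_nonneg fun x _ =>
      Finset.sum_nonneg fun y _ => mul_nonneg (mul_nonneg (sq_nonneg _) (hω x y)) (sq_nonneg _)))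
      (by positivity)
  have hMN : ∀ t ∈ Set.Icc s₁ s₂, M t ≤ N t := fun t ht => by
    rw [hMeq t ht, hNeq t ht]
    refine mul_le_mul_of_nonneg_left (Finset.sum_le_sum fun x _ => ?_) (by positivity)
    refine mul_le_mul_of_nonneg_right ?_ (hmu x)
    exact mul_le_of_le_one_left (Real.rpow_nonneg (hu t ht x).le _)
      (pow_le_one₀ (hη01 x).1 (hη01 x).2)
  set K := 4 * α ^ 2 * Γ ^ 2 + Z with hK
  have hK0 : 0 ≤ K := by positivity
  set F : ℝ → ℝ := fun t =>
    ζ t * ((B.card : ℝ)⁻¹ * ∑ x ∈ B, η x ^ 2 * u t x ^ (2 * α) * mu nbr ω x) with hF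
  have hderiv : ∀ t ∈ Set.Icc s₁ s₂, ∃ F', HasDerivAt F F' t ∧ F' ≤ K * N t - ζ t * E t := by
    intro t ht
    choose! d hd hdle using fun x (hx : x ∈ B) => hsub x hx t ht
    have hsumd : HasDerivAt (fun s => ∑ x ∈ B, η x ^ 2 * u s x ^ (2 * α) * mu nbr ω x)
        (∑ x ∈ B, η x ^ 2 * (d x * (2 * α) * u t x ^ (2 * α - 1)) * mu nbr ω x) t :=
      HasDerivAt.fun_sum fun x hx =>
        (((hd x hx).rpow_const (Or.inl (hu t ht x).ne')).const_mul _).mul_const _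
    refine ⟨_, ((hζC1.differentiable one_ne_zero t).hasDerivAt).mul (hsumd.const_mul _), ?_⟩
    rw [← hMeq t ht]
    have h1 : deriv ζ t * M t ≤ Z * N t :=
      mul_le_mul ((le_abs_self _).trans (hZle t ht)) (hMN t ht) (hM0 t ht) hZ0
    have h2 : ∑ x ∈ B, η x ^ 2 * (d x * (2 * α) * u t x ^ (2 * α - 1)) * mu nbr ω x ≤
        ∑ x ∈ B, η x ^ 2 * (2 * α * u t x ^ (2 * α - 1)) *
          (mu nbr ω x * lap nbr ω (u t) x) := by
      refine Finset.sum_le_sum fun x hx => ?_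
      have h3 : 0 ≤ η x ^ 2 * (2 * α * u t x ^ (2 * α - 1)) * mu nbr ω x :=
        mul_nonneg (mul_nonneg (sq_nonneg _)
          (mul_nonneg (by linarith) (Real.rpow_nonneg (hu t ht x).le _))) (hmu x)
      have h4 := mul_le_mul_of_nonneg_left (hdle x hx) h3
      linarith
    have h5 := energySq_add_sum_mul_lap_le hnbr hsymm hpos hzero hηsupp hη01 hηbdry (hu t ht) hα
    have h6 : (B.card : ℝ)⁻¹ *
        ∑ x ∈ B, η x ^ 2 * (d x * (2 * α) * u t x ^ (2 * α - 1)) * mu nbr ω x ≤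
        4 * α ^ 2 * Γ ^ 2 * N t - E t := by
      have h7 := mul_le_mul_of_nonneg_left ((add_le_add_right h2 _).trans h5)
        (show 0 ≤ (B.card : ℝ)⁻¹ by positivity)
      rw [hNeq t ht]
      simp only [hE, div_eq_inv_mul]
      linarith
    have h8 := mul_le_mul_of_nonneg_left h6 (hζ01 t).1
    have h9 := mul_le_mul_of_nonneg_right (hζ01 t).2
      (mul_nonneg (show 0 ≤ 4 * α ^ 2 * Γ ^ 2 by positivity) (hN0 t ht))
    rw [hK]
    linarith
  choose! F' hF' hF'le using hderiv
  have hζE : ContinuousOn (fun t => ζ t * E t) (Set.Icc s₁ s₂) :=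
    hζC1.continuous.continuousOn.mul hEcont
  have hint : ∀ {f : ℝ → ℝ}, ContinuousOn f (Set.Icc s₁ s₂) → ∀ t ∈ Set.Icc s₁ s₂,
      IntervalIntegrable f volume s₁ t := fun hf t ht =>
    (hf.mono (Set.Icc_subset_Icc_right ht.2)).intervalIntegrable_of_Icc ht.1
  have hgrow : ∀ t ∈ Set.Icc s₁ s₂,
      ζ t * M t + ∫ r in s₁..t, ζ r * E r ≤ K * ∫ r in s₁..t, N r := by
    intro t ht
    have hsubset : Set.Icc s₁ t ⊆ Set.Icc s₁ s₂ := Set.Icc_subset_Icc_right ht.2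
    have h := intervalIntegral.sub_le_integral_of_hasDeriv_right_of_le ht.1
      (φ := fun r => K * N r - ζ r * E r)
      (fun r hr => (hF' r (hsubset hr)).continuousAt.continuousWithinAt)
      (fun r hr => (hF' r (hsubset (Set.Ioo_subset_Icc_self hr))).hasDerivWithinAt)
      (((continuousOn_const.mul hNcont).sub hζE).mono hsubset).integrableOn_Icc
      (fun r hr => hF'le r (hsubset (Set.Ioo_subset_Icc_self hr)))
    rw [intervalIntegral.integral_sub ((hint hNcont t ht).const_mul K) (hint hζE t ht),
      intervalIntegral.integral_const_mul] at h
    simp only [hF, hζs₁, zero_mul, sub_zero] at h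
    rw [hMeq t ht]
    linarith
  have hNint : ∀ t ∈ Set.Icc s₁ s₂, 0 ≤ ∫ r in s₁..t, N r := fun t ht =>
    intervalIntegral.integral_nonneg ht.1 fun r hr => hN0 r ⟨hr.1, hr.2.trans ht.2⟩
  have hs₂ : s₂ ∈ Set.Icc s₁ s₂ := Set.right_mem_Icc.2 hs
  have hKle : K * ∫ r in s₁..s₂, N r ≤ 64 * α ^ 2 * (Γ ^ 2 + Z) * ∫ r in s₁..s₂, N r := by
    refine mul_le_mul_of_nonneg_right ?_ (hNint s₂ hs₂)
    have h1 : 1 ≤ α ^ 2 := one_le_pow₀ hα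
    have h2 := mul_le_mul_of_nonneg_right h1 hZ0
    have h3 : 0 ≤ α ^ 2 * Γ ^ 2 := by positivity
    rw [hK]
    linarith
  constructor
  · have h1 := hgrow s₂ hs₂
    have h2 := mul_nonneg (hζ01 s₂).1 (hM0 s₂ hs₂)
    linarith
  · refine csSup_le ⟨_, s₂, hs₂, rfl⟩ ?_
    rintro _ ⟨t, ht, rfl⟩
    have h1 := hgrow t ht
    have h2 : 0 ≤ ∫ r in s₁..t, ζ r * E r :=
      intervalIntegral.integral_nonneg ht.1 fun r _ => mul_nonneg (hζ01 r).1 (hE0 r)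
    have h3 : ∫ r in s₁..t, N r ≤ ∫ r in s₁..s₂, N r :=
      intervalIntegral.integral_mono_interval le_rfl ht.1 ht.2
        ((ae_restrict_iff' measurableSet_Ioc).2
          (Filter.Eventually.of_forall fun r hr => hN0 r ⟨hr.1.le, hr.2⟩)) (hint hNcont s₂ hs₂)
    have h4 := mul_le_mul_of_nonneg_left h3 hK0
    change ζ t * M t ≤ _
    linarith
end
end
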